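/- arXiv:1708.00832 — 2 statements merged into one kernel-verified Lean document; each statement's English description precedes it below -/
import Mathlib

section
/- Let T = {3124, 4123, 1243} (patterns of length 4). Then the generating function for T-avoiders satisfies, as formal power series over ℚ, x·(1-2x)^2·F_T(x) = (1 - 5x + 9x^2 - 8x^3 + 4x^4)·C(x) - (1 - 5x + 9x^2 - 6x^3 + x^4), where C(x) is the Catalan number generating function. -/
open PowerSeries

/-- A permutation `π` of `{0,…,n-1}` contains the pattern `σ` (of length `k`) if there is an
order-embedding of positions on which the values of `π` appear in the same relative order as
the values of `σ`. -/
def ContainsPattern {n k : ℕ} (π : Equiv.Perm (Fin n)) (σ : Fin k → Fin k) : Prop :=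
  ∃ f : Fin k ↪o Fin n, ∀ a b : Fin k, σ a < σ b ↔ π (f a) < π (f b)

/-- The number of permutations of length `n` avoiding every pattern in `T`. -/
noncomputable def avoiderCount (T : Set (Fin 4 → Fin 4)) (n : ℕ) : ℕ :=
  Nat.card {π : Equiv.Perm (Fin n) // ∀ σ ∈ T, ¬ ContainsPattern π σ}

/-- The generating function `F_T(x) = ∑_n |S_n(T)| xⁿ` over `ℚ`. -/
noncomputable def avoiderGF (T : Set (Fin 4 → Fin 4)) : PowerSeries ℚ :=
  PowerSeries.mk fun n => (avoiderCount T n : ℚ)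

/-- The generating function of the Catalan numbers over `ℚ`. -/
noncomputable def catalanGF : PowerSeries ℚ :=
  PowerSeries.mk fun n => (catalan n : ℚ)

/-!
Complementing values turns the patterns into `2431`, `1432` and `4312`, and avoiders are built from
the right by inserting a new first letter `u`. This creates a forbidden pattern exactly when there
is a `312` below `u` or a `321` whose middle value is at least `u`, so the admissible letters form
an interval. Which values of this interval are inversion tops, where the first ascent appears in it
and whether there is a `321` determine the same data for every child, and the avoiders thus form a
generating tree. Only six families of labels occur in it.

The generating functions of the subtrees satisfy the linear system `h v = 1 + x ∑ h w`, the sum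
being over the children `w` of `v`, and such a system has only one solution in power series. It
therefore suffices to verify closed forms in `1 / (1 - x)`, `1 / (1 - 2x)` and the Catalan series
`c`; the sums over children telescope, those of powers of `c` because of `x c² = c - 1`.
-/

section Pattern

variable {n k : ℕ}

lemma containsPattern_iff_strictMono {π : Equiv.Perm (Fin n)} {σ τ : Fin k → Fin k}
    (hτσ : Function.LeftInverse τ σ) (hστ : Function.RightInverse τ σ) :
    ContainsPattern π σ ↔ ∃ f : Fin k ↪o Fin n, StrictMono fun a => π (f (τ a)) := by
  refine exists_congr fun f => ⟨fun h a b hab => ?_, fun h a b => ?_⟩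
  · rw [← h, hστ a, hστ b]
    exact hab
  · rw [← h.lt_iff_lt, hτσ a, hτσ b]

lemma exists_orderEmbedding_fin_four {P : Fin n → Fin n → Fin n → Fin n → Prop} :
    (∃ f : Fin 4 ↪o Fin n, P (f 0) (f 1) (f 2) (f 3)) ↔
      ∃ i j k l, i < j ∧ j < k ∧ k < l ∧ P i j k l := by
  constructor
  · rintro ⟨f, hf⟩
    exact ⟨f 0, f 1, f 2, f 3, f.strictMono (by decide), f.strictMono (by decide),
      f.strictMono (by decide), hf⟩
  · rintro ⟨i, j, k, l, hij, hjk, hkl, h⟩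
    have hmono : StrictMono ![i, j, k, l] := by
      simp [Fin.strictMono_iff_lt_succ, Fin.forall_fin_succ, hij, hjk, hkl]
    exact ⟨OrderEmbedding.ofStrictMono _ hmono, h⟩

lemma containsPattern_iff_exists_lt {π : Equiv.Perm (Fin n)} {σ τ : Fin 4 → Fin 4}
    (hτσ : Function.LeftInverse τ σ) (hστ : Function.RightInverse τ σ) :
    ContainsPattern π σ ↔ ∃ i j k l, i < j ∧ j < k ∧ k < l ∧
      π (![i, j, k, l] (τ 0)) < π (![i, j, k, l] (τ 1)) ∧
      π (![i, j, k, l] (τ 1)) < π (![i, j, k, l] (τ 2)) ∧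
      π (![i, j, k, l] (τ 2)) < π (![i, j, k, l] (τ 3)) := by
  rw [containsPattern_iff_strictMono hτσ hστ, ← exists_orderEmbedding_fin_four]
  refine exists_congr fun f => ?_
  have hf : ∀ a, ![f 0, f 1, f 2, f 3] a = f a := by simp [Fin.forall_fin_succ]
  simp only [hf, Fin.strictMono_iff_lt_succ, Fin.forall_fin_succ]
  simp

/-- Avoidance of `2431`, `1432` and `4312`, the complements of `3124`, `4123` and `1243`. The first
two patterns together say that an entry precedes a `321` whose middle entry exceeds it. Passing to
complements makes all thresholds on values below upper bounds, so that no subtraction is needed. -/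
def AvoidsComplements (ρ : Equiv.Perm (Fin n)) : Prop :=
  ∀ i j k l, i < j → j < k → k < l →
    ¬(ρ i < ρ k ∧ ρ l < ρ k ∧ ρ k < ρ j) ∧ ¬(ρ k < ρ l ∧ ρ l < ρ j ∧ ρ j < ρ i)

lemma avoids_iff_avoidsComplements (π : Equiv.Perm (Fin n)) :
    (∀ σ ∈ ({![2,0,1,3], ![3,0,1,2], ![0,1,3,2]} : Set (Fin 4 → Fin 4)), ¬ContainsPattern π σ) ↔
      AvoidsComplements (π.trans Fin.revPerm) := by
  have h3124 := containsPattern_iff_exists_lt (π := π) (σ := ![2,0,1,3]) (τ := ![1,2,0,3])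
    (by decide) (by decide)
  have h4123 := containsPattern_iff_exists_lt (π := π) (σ := ![3,0,1,2]) (τ := ![1,2,3,0])
    (by decide) (by decide)
  have h1243 := containsPattern_iff_exists_lt (π := π) (σ := ![0,1,3,2]) (τ := ![0,1,3,2])
    (by decide) (by decide)
  simp only [Matrix.cons_val] at h3124 h4123 h1243
  simp only [Set.mem_insert_iff, Set.mem_singleton_iff, forall_eq_or_imp, forall_eq, h3124, h4123,
    h1243, AvoidsComplements, Equiv.trans_apply, Fin.revPerm_apply, Fin.rev_lt_rev]
  refine ⟨fun ⟨h₁, h₂, h₃⟩ i j k l hij hjk hkl => ⟨fun ⟨hki, hkl', hjk'⟩ => ?_, fun h => ?_⟩,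
    fun h => ⟨?_, ?_, ?_⟩⟩
  · have hil : π i ≠ π l := π.injective.ne (hij.trans (hjk.trans hkl)).ne
    rcases hil.lt_or_gt with hlt | hgt
    · exact h₁ ⟨i, j, k, l, hij, hjk, hkl, hjk', hki, hlt⟩
    · exact h₂ ⟨i, j, k, l, hij, hjk, hkl, hjk', hkl', hgt⟩
  · exact h₃ ⟨i, j, k, l, hij, hjk, hkl, h.2.2, h.2.1, h.1⟩
  · rintro ⟨i, j, k, l, hij, hjk, hkl, hjk', hki, hil⟩
    exact (h i j k l hij hjk hkl).1 ⟨hki, hki.trans hil, hjk'⟩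
  · rintro ⟨i, j, k, l, hij, hjk, hkl, hjk', hkl', hli⟩
    exact (h i j k l hij hjk hkl).1 ⟨hkl'.trans hli, hkl', hjk'⟩
  · rintro ⟨i, j, k, l, hij, hjk, hkl, hij', hjl, hlk⟩
    exact (h i j k l hij hjk hkl).2 ⟨hlk, hjl, hij'⟩

lemma avoiderCount_eq_card_avoidsComplements (n : ℕ) :
    avoiderCount {![2,0,1,3], ![3,0,1,2], ![0,1,3,2]} n =
      Nat.card {ρ : Equiv.Perm (Fin n) // AvoidsComplements ρ} := by
  refine Nat.card_congr ((Equiv.mulLeft Fin.revPerm).subtypeEquiv fun π => ?_)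
  exact avoids_iff_avoidsComplements π

end Pattern

section IncreasingTuples

variable {n : ℕ}

lemma exists_lt_fin_succ {P : Fin (n + 1) → Fin (n + 1) → Prop} :
    (∃ i j, i < j ∧ P i j) ↔ (∃ j : Fin n, P 0 j.succ) ∨ ∃ i j, i < j ∧ P (.succ i) (.succ j) := by
  simp [Fin.exists_fin_succ]

lemma exists_lt_lt_fin_succ {P : Fin (n + 1) → Fin (n + 1) → Fin (n + 1) → Prop} :
    (∃ i j k, i < j ∧ j < k ∧ P i j k) ↔
      (∃ j k : Fin n, j < k ∧ P 0 j.succ k.succ) ∨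
        ∃ i j k, i < j ∧ j < k ∧ P (.succ i) (.succ j) (.succ k) := by
  simp [Fin.exists_fin_succ]

lemma forall_lt_lt_lt_fin_succ {P : Fin (n + 1) → Fin (n + 1) → Fin (n + 1) → Fin (n + 1) → Prop} :
    (∀ i j k l, i < j → j < k → k < l → P i j k l) ↔
      (∀ j k l : Fin n, j < k → k < l → P 0 j.succ k.succ l.succ) ∧
        ∀ i j k l, i < j → j < k → k < l → P (.succ i) (.succ j) (.succ k) (.succ l) := by
  simp [Fin.forall_fin_succ]

end IncreasingTuples

section InsertFirst

variable {n : ℕ}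

/-- The permutation whose word is that of `ρ`, with the values `≥ u` raised by one, preceded by the
new first letter `u`. -/
def insertFirst (u : Fin (n + 1)) (ρ : Equiv.Perm (Fin n)) : Equiv.Perm (Fin (n + 1)) :=
  (finSuccEquiv n).trans (ρ.optionCongr.trans (finSuccEquiv' u).symm)

@[simp]
lemma insertFirst_zero (u : Fin (n + 1)) (ρ : Equiv.Perm (Fin n)) : insertFirst u ρ 0 = u := rfl

lemma insertFirst_succ (u : Fin (n + 1)) (ρ : Equiv.Perm (Fin n)) (i : Fin n) :
    insertFirst u ρ i.succ = u.succAbove (ρ i) := rfl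

lemma insertFirst_bijective :
    Function.Bijective fun p : Fin (n + 1) × Equiv.Perm (Fin n) => insertFirst p.1 p.2 := by
  rw [Fintype.bijective_iff_injective_and_card]
  refine ⟨?_, by simp [Fintype.card_perm, Nat.factorial_succ]⟩
  rintro ⟨u, ρ⟩ ⟨v, ρ'⟩ h
  obtain rfl : u = v := congr($h 0)
  have hρ : ρ = ρ' := Equiv.ext fun i => Fin.succAbove_right_injective congr($h i.succ)
  rw [hρ]

variable {u : Fin (n + 1)} {ρ : Equiv.Perm (Fin n)}

@[simp]
lemma insertFirst_succ_lt_succ {i j : Fin n} :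
    insertFirst u ρ i.succ < insertFirst u ρ j.succ ↔ ρ i < ρ j :=
  Fin.succAbove_lt_succAbove_iff

@[simp]
lemma lt_insertFirst_succ {i : Fin n} : u < insertFirst u ρ i.succ ↔ (u : ℕ) ≤ ρ i :=
  Fin.lt_succAbove_iff_le_castSucc u (ρ i)

@[simp]
lemma insertFirst_succ_lt {i : Fin n} : insertFirst u ρ i.succ < u ↔ (ρ i : ℕ) < u :=
  Fin.succAbove_lt_iff_castSucc_lt u (ρ i)

lemma coe_insertFirst_succ (i : Fin n) :
    (insertFirst u ρ i.succ : ℕ) = if (ρ i : ℕ) < u then (ρ i : ℕ) else ρ i + 1 := by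
  rw [insertFirst_succ, Fin.succAbove]
  split_ifs <;> simp_all [Fin.lt_def]

end InsertFirst

section Configurations

variable {n : ℕ}

/-- The value `x` has a smaller value to its right, i.e. it is not a right-to-left minimum. -/
def IsInversionTop (ρ : Equiv.Perm (Fin n)) (x : ℕ) : Prop :=
  ∃ i j, i < j ∧ (ρ i : ℕ) = x ∧ ρ j < ρ i

/-- There is an occurrence of `12` with values less than `x`. -/
def HasAscentBelow (ρ : Equiv.Perm (Fin n)) (x : ℕ) : Prop :=
  ∃ i j, i < j ∧ ρ i < ρ j ∧ (ρ j : ℕ) < x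

/-- There is an occurrence of `312` with values less than `x`, so that a new first letter `x` would
create a `4312`. -/
def Has312Below (ρ : Equiv.Perm (Fin n)) (x : ℕ) : Prop :=
  ∃ i j k, i < j ∧ j < k ∧ ρ j < ρ k ∧ ρ k < ρ i ∧ (ρ i : ℕ) < x

/-- There is an occurrence of `321` with middle value at least `x`, so that a new first letter `x`
would create a `1432` or a `2431`. -/
def Has321MiddleGE (ρ : Equiv.Perm (Fin n)) (x : ℕ) : Prop :=
  ∃ i j k, i < j ∧ j < k ∧ ρ k < ρ j ∧ ρ j < ρ i ∧ x ≤ (ρ j : ℕ)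

variable {u : Fin (n + 1)} {ρ : Equiv.Perm (Fin n)} {x : ℕ}

lemma exists_coe_apply_eq (ρ : Equiv.Perm (Fin n)) (hx : x < n) : ∃ i, (ρ i : ℕ) = x :=
  ⟨ρ.symm ⟨x, hx⟩, by simp⟩

lemma avoidsComplements_insertFirst :
    AvoidsComplements (insertFirst u ρ) ↔
      AvoidsComplements ρ ∧ ¬Has312Below ρ u ∧ ¬Has321MiddleGE ρ u := by
  simp only [AvoidsComplements, Has312Below, Has321MiddleGE, forall_lt_lt_lt_fin_succ,
    insertFirst_zero, insertFirst_succ_lt_succ, insertFirst_succ_lt, lt_insertFirst_succ]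
  grind

lemma isInversionTop_insertFirst_self : IsInversionTop (insertFirst u ρ) u ↔ 0 < (u : ℕ) := by
  constructor
  · rintro ⟨i, j, -, hi, hji⟩
    exact hi ▸ (Nat.zero_le _).trans_lt (Fin.lt_def.1 hji)
  · intro hu
    obtain ⟨j, hj⟩ := exists_coe_apply_eq ρ (x := 0) (by omega)
    exact ⟨0, j.succ, j.succ_pos, rfl, insertFirst_succ_lt.2 (hj ▸ hu)⟩

lemma isInversionTop_insertFirst_of_lt (hx : x < u) :
    IsInversionTop (insertFirst u ρ) x ↔ IsInversionTop ρ x := by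
  simp only [IsInversionTop, exists_lt_fin_succ, insertFirst_zero,
    insertFirst_succ_lt_succ, insertFirst_succ_lt]
  grind [coe_insertFirst_succ]

lemma isInversionTop_insertFirst_add_one (hx : u ≤ x) :
    IsInversionTop (insertFirst u ρ) (x + 1) ↔ IsInversionTop ρ x := by
  simp only [IsInversionTop, exists_lt_fin_succ, insertFirst_zero,
    insertFirst_succ_lt_succ, insertFirst_succ_lt]
  grind [coe_insertFirst_succ]

lemma hasAscentBelow_insertFirst_of_le (hx : x ≤ u) :
    HasAscentBelow (insertFirst u ρ) x ↔ HasAscentBelow ρ x := by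
  simp only [HasAscentBelow, exists_lt_fin_succ, insertFirst_zero,
    insertFirst_succ_lt_succ, lt_insertFirst_succ]
  grind [coe_insertFirst_succ]

lemma hasAscentBelow_insertFirst_add_one (hux : u ≤ x) (hx : x ≤ n) :
    HasAscentBelow (insertFirst u ρ) (x + 1) ↔ u < x ∨ HasAscentBelow ρ x := by
  have := fun h => exists_coe_apply_eq (x := u) ρ h
  simp only [HasAscentBelow, exists_lt_fin_succ, insertFirst_zero,
    insertFirst_succ_lt_succ, lt_insertFirst_succ]
  grind [coe_insertFirst_succ]

lemma has312Below_insertFirst_of_le (hx : x ≤ u) :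
    Has312Below (insertFirst u ρ) x ↔ Has312Below ρ x := by
  simp only [Has312Below, exists_lt_lt_fin_succ, insertFirst_zero,
    insertFirst_succ_lt_succ, insertFirst_succ_lt]
  grind [coe_insertFirst_succ]

lemma has312Below_insertFirst_add_one (hx : u ≤ x) :
    Has312Below (insertFirst u ρ) (x + 1) ↔ HasAscentBelow ρ u ∨ Has312Below ρ x := by
  simp only [Has312Below, HasAscentBelow, exists_lt_lt_fin_succ, insertFirst_zero,
    insertFirst_succ_lt_succ, insertFirst_succ_lt]
  grind [coe_insertFirst_succ]

lemma has321MiddleGE_insertFirst_of_le (hx : x ≤ u) :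
    Has321MiddleGE (insertFirst u ρ) x ↔
      (∃ y, x ≤ y ∧ y < u ∧ IsInversionTop ρ y) ∨ Has321MiddleGE ρ x := by
  simp only [Has321MiddleGE, IsInversionTop, exists_lt_lt_fin_succ, insertFirst_zero,
    insertFirst_succ_lt_succ, insertFirst_succ_lt]
  grind [coe_insertFirst_succ]

lemma has321MiddleGE_insertFirst_add_one (hx : u ≤ x) :
    Has321MiddleGE (insertFirst u ρ) (x + 1) ↔ Has321MiddleGE ρ x := by
  simp only [Has321MiddleGE, exists_lt_lt_fin_succ, insertFirst_zero,
    insertFirst_succ_lt_succ, insertFirst_succ_lt]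
  grind [coe_insertFirst_succ]

end Configurations

section SiteStates

/-- The data of an avoider `ρ` that governs its first-letter insertions. The admissible new first
letters form an interval `b, …, b + word.length`; `word` records which of the values
`b, …, b + word.length - 1` are inversion tops, `ascentOffset` is the least `t` such that `ρ` has an
ascent below `b + t` (any larger number if there is none in the interval), and `has321` says whether
`0 < b`. -/
structure SiteState where
  word : List Bool
  ascentOffset : ℕ
  has321 : Bool

namespace SiteState

open List

/-- The state after inserting the letter `b + d + e` in a state with ascent offset `t` and flag `c`
whose word consists of `d` letters (the last of which is `true`, if there is one), followed by `e`
letters `false` and the word `S`. -/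
def childAt (t : ℕ) (c : Bool) (d e : ℕ) (S : List Bool) : SiteState where
  word := replicate e false ++ if t ≤ d + e then [] else (c || decide (0 < d + e)) :: S
  ascentOffset := (if t ≤ d + e then t else d + e + 2) - d
  has321 := c || decide (0 < d)

/-- The states `childAt t c` reached from the sites of a word of which `d + e` letters have been
read already. -/
def childrenFrom (t : ℕ) (c : Bool) : ℕ → ℕ → List Bool → List SiteState
  | d, e, [] => [childAt t c d e []]
  | d, e, false :: S => childAt t c d e (false :: S) :: childrenFrom t c d (e + 1) S
  | d, e, true :: S => childAt t c d e (true :: S) :: childrenFrom t c (d + e + 1) 0 S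

/-- The states of all avoiders obtained by one insertion, listed by increasing new letter. -/
def children (s : SiteState) : List SiteState :=
  childrenFrom s.ascentOffset s.has321 0 0 s.word

/-- The state of the empty permutation. -/
def empty : SiteState := ⟨[], 2, false⟩

/-- The state `s` describes the sites of `ρ`, the least of which is `b`. -/
structure Represents {n : ℕ} (s : SiteState) (ρ : Equiv.Perm (Fin n)) (b : ℕ) : Prop where
  avoidsComplements : AvoidsComplements ρ
  add_length_le : b + s.word.length ≤ n
  has321_iff : s.has321 = true ↔ 0 < b
  has312Below_iff : ∀ x ≤ n, Has312Below ρ x ↔ b + s.word.length < x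
  has321MiddleGE_iff : ∀ x ≤ n, Has321MiddleGE ρ x ↔ x < b
  isInversionTop_iff : ∀ i < s.word.length, IsInversionTop ρ (b + i) ↔ s.word[i]? = some true
  hasAscentBelow_iff : ∀ i ≤ s.word.length, HasAscentBelow ρ (b + i) ↔ s.ascentOffset ≤ i

lemma represents_empty (ρ : Equiv.Perm (Fin 0)) : Represents empty ρ 0 where
  avoidsComplements := fun i => i.elim0
  add_length_le := le_rfl
  has321_iff := by simp [empty]
  has312Below_iff := by simp [Has312Below]
  has321MiddleGE_iff := by simp [Has321MiddleGE]
  isInversionTop_iff := by simp [empty]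
  hasAscentBelow_iff := by simp [HasAscentBelow, empty]

namespace Represents

variable {n b e : ℕ} {s : SiteState} {ρ : Equiv.Perm (Fin n)} {u : Fin (n + 1)} {P S : List Bool}

lemma avoidsComplements_insertFirst_iff (h : s.Represents ρ b) :
    AvoidsComplements (insertFirst u ρ) ↔ b ≤ u ∧ (u : ℕ) ≤ b + s.word.length := by
  have hu : (u : ℕ) ≤ n := u.is_le
  rw [avoidsComplements_insertFirst, h.has312Below_iff u hu, h.has321MiddleGE_iff u hu]
  grind [h.avoidsComplements]

lemma hasAscentBelow_site_iff (h : s.Represents ρ b)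
    (hword : s.word = P ++ replicate e false ++ S) (hu : (u : ℕ) = b + P.length + e) :
    HasAscentBelow ρ u ↔ s.ascentOffset ≤ P.length + e := by
  rw [hu, add_assoc, h.hasAscentBelow_iff _ (by grind)]

lemma childAt_has312Below_iff (h : s.Represents ρ b)
    (hword : s.word = P ++ replicate e false ++ S) (hu : (u : ℕ) = b + P.length + e) :
    ∀ x ≤ n + 1, Has312Below (insertFirst u ρ) x ↔
      b + P.length + (childAt s.ascentOffset s.has321 P.length e S).word.length < x := by
  intro x hx
  rcases le_or_gt x u with hxu | hux
  · rw [has312Below_insertFirst_of_le hxu, h.has312Below_iff x (by omega)]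
    grind [childAt]
  · obtain ⟨x, rfl⟩ := Nat.exists_eq_add_one_of_ne_zero (Nat.ne_zero_of_lt hux)
    rw [has312Below_insertFirst_add_one (by omega), h.hasAscentBelow_site_iff hword hu,
      h.has312Below_iff x (by omega)]
    grind [childAt]

lemma childAt_has321MiddleGE_iff (h : s.Represents ρ b)
    (hword : s.word = P ++ replicate e false ++ S) (hP : P.getLast? ≠ some false)
    (hu : (u : ℕ) = b + P.length + e) :
    ∀ x ≤ n + 1, Has321MiddleGE (insertFirst u ρ) x ↔ x < b + P.length := by
  intro x hx
  rcases le_or_gt x u with hxu | hux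
  · rw [has321MiddleGE_insertFirst_of_le hxu, h.has321MiddleGE_iff x (by omega)]
    constructor
    · rintro (⟨y, hxy, hyu, hy⟩ | hxb)
      · by_contra! hbx
        obtain ⟨i, rfl⟩ := Nat.exists_eq_add_of_le (show b ≤ y by omega)
        rw [h.isInversionTop_iff i (by grind)] at hy
        grind
      · omega
    · intro hxb
      by_cases hx : x < b
      · exact .inr hx
      · refine .inl ⟨b + (P.length - 1), by omega, by omega, ?_⟩
        rw [h.isInversionTop_iff _ (by grind)]
        rcases hlast : s.word[P.length - 1]? with _ | _ | _ <;> grind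
  · obtain ⟨x, rfl⟩ := Nat.exists_eq_add_one_of_ne_zero (Nat.ne_zero_of_lt hux)
    rw [has321MiddleGE_insertFirst_add_one (by omega), h.has321MiddleGE_iff x (by omega)]
    omega

lemma childAt_isInversionTop_iff (h : s.Represents ρ b)
    (hword : s.word = P ++ replicate e false ++ S) (hu : (u : ℕ) = b + P.length + e) :
    ∀ i < (childAt s.ascentOffset s.has321 P.length e S).word.length,
      IsInversionTop (insertFirst u ρ) (b + P.length + i) ↔
        (childAt s.ascentOffset s.has321 P.length e S).word[i]? = some true := by
  intro i hi
  rcases lt_trichotomy i e with hie | rfl | hei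
  · rw [isInversionTop_insertFirst_of_lt (by omega), add_assoc, h.isInversionTop_iff _ (by grind)]
    grind [childAt]
  · have := h.has321_iff
    rw [← hu, isInversionTop_insertFirst_self, hu]
    grind [childAt]
  · obtain ⟨m, rfl⟩ := Nat.exists_eq_add_of_lt hei
    rw [← add_assoc, isInversionTop_insertFirst_add_one (by omega), add_assoc b,
      h.isInversionTop_iff _ (by grind [childAt])]
    grind [childAt]

lemma childAt_hasAscentBelow_iff (h : s.Represents ρ b)
    (hword : s.word = P ++ replicate e false ++ S) (hu : (u : ℕ) = b + P.length + e) :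
    ∀ i ≤ (childAt s.ascentOffset s.has321 P.length e S).word.length,
      HasAscentBelow (insertFirst u ρ) (b + P.length + i) ↔
        (childAt s.ascentOffset s.has321 P.length e S).ascentOffset ≤ i := by
  intro i hi
  have hlength := h.add_length_le
  rcases le_or_gt i e with hie | hei
  · rw [hasAscentBelow_insertFirst_of_le (by omega), add_assoc, h.hasAscentBelow_iff _ (by grind)]
    grind [childAt]
  · obtain ⟨m, rfl⟩ := Nat.exists_eq_add_of_lt hei
    rw [← add_assoc, hasAscentBelow_insertFirst_add_one (by omega) (by grind [childAt]),
      add_assoc b, h.hasAscentBelow_iff _ (by grind [childAt])]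
    grind [childAt]

lemma childAt (h : s.Represents ρ b) (hword : s.word = P ++ replicate e false ++ S)
    (hP : P.getLast? ≠ some false) (hu : (u : ℕ) = b + P.length + e) :
    (childAt s.ascentOffset s.has321 P.length e S).Represents (insertFirst u ρ) (b + P.length) where
  avoidsComplements := h.avoidsComplements_insertFirst_iff.2 (by grind)
  add_length_le := by grind [SiteState.childAt, h.add_length_le]
  has321_iff := by grind [SiteState.childAt, h.has321_iff]
  has312Below_iff := h.childAt_has312Below_iff hword hu
  has321MiddleGE_iff := h.childAt_has321MiddleGE_iff hword hP hu
  isInversionTop_iff := h.childAt_isInversionTop_iff hword hu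
  hasAscentBelow_iff := h.childAt_hasAscentBelow_iff hword hu

end Represents

end SiteState

end SiteStates

section GeneratingTree

variable {σ τ : Type*}

/-- The multiset of vertices at depth `n` in the generating tree with root `s` in which the vertex
`v` has the list `children v` of children. -/
def treeLevel (children : σ → List σ) : ℕ → σ → Multiset σ
  | 0, s => {s}
  | n + 1, s => (treeLevel children n s).bind fun v => children v

lemma treeLevel_succ_eq_bind_children (children : σ → List σ) (n : ℕ) (s : σ) :
    treeLevel children (n + 1) s = (children s : Multiset σ).bind (treeLevel children n) := by
  induction n with
  | zero => simpa [treeLevel] using (Multiset.bind_singleton (children s : Multiset σ) id).symm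
  | succ n ih => rw [treeLevel, ih, Multiset.bind_assoc]; rfl

lemma treeLevel_map {children : σ → List σ} {children' : τ → List τ} {f : σ → τ}
    (hf : ∀ s, children' (f s) = (children s).map f) (n : ℕ) (s : σ) :
    treeLevel children' n (f s) = (treeLevel children n s).map f := by
  induction n with
  | zero => simp [treeLevel]
  | succ n ih =>
    simp only [treeLevel, ih, Multiset.bind_map, Multiset.map_bind, hf, Multiset.map_coe]

/-- The generating function of the level sizes of a generating tree. -/
noncomputable def treeGF (children : σ → List σ) (s : σ) : ℚ⟦X⟧ :=
  mk fun n => ((treeLevel children n s).card : ℚ)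

lemma treeGF_eq_one_add (children : σ → List σ) (s : σ) :
    treeGF children s = 1 + X * ((children s).map (treeGF children)).sum := by
  ext n
  cases n with
  | zero => simp [treeGF, treeLevel]
  | succ n =>
    simp only [treeGF, coeff_mk, treeLevel_succ_eq_bind_children, Multiset.card_bind, map_add,
      coeff_one, coeff_succ_X_mul]
    simp [treeGF, map_list_sum, Function.comp_def, Nat.cast_list_sum]

lemma eq_of_eq_add_X_mul_sum_children {children : σ → List σ} {g h f : σ → ℚ⟦X⟧}
    (hg : ∀ s, g s = f s + X * ((children s).map g).sum)
    (hh : ∀ s, h s = f s + X * ((children s).map h).sum) : g = h := by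
  suffices ∀ n s, coeff n (g s) = coeff n (h s) from funext fun s => ext fun n => this n s
  intro n
  induction n with
  | zero => intro s; rw [hg, hh]; simp
  | succ n ih => intro s; rw [hg, hh]; simp [map_list_sum, Function.comp_def, ih]

end GeneratingTree

section Avoiders

open scoped Classical in
/-- The permutations of length `n` avoiding the complemented patterns. -/
noncomputable def avoiders (n : ℕ) : Finset (Equiv.Perm (Fin n)) := {ρ | AvoidsComplements ρ}

open scoped Classical in
/-- The letters `u` that can be placed in front of `ρ` without creating a forbidden pattern. -/
noncomputable def sites {n : ℕ} (ρ : Equiv.Perm (Fin n)) : Finset (Fin (n + 1)) :=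
  {u | AvoidsComplements (insertFirst u ρ)}

variable {n : ℕ}

lemma avoiders_succ_val :
    (avoiders (n + 1)).val =
      (avoiders n).val.bind fun ρ => (sites ρ).val.map fun u => insertFirst u ρ := by
  have hinj {u v : Fin (n + 1)} {ρ ρ' : Equiv.Perm (Fin n)}
      (h : insertFirst u ρ = insertFirst v ρ') : u = v ∧ ρ = ρ' :=
    Prod.ext_iff.1 (insertFirst_bijective.injective (a₁ := (u, ρ)) (a₂ := (v, ρ')) h)
  refine (Multiset.Nodup.ext (avoiders (n + 1)).nodup ?_).2 fun ρ => ?_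
  · refine Multiset.nodup_bind.2 ⟨fun ρ _ => (sites ρ).nodup.map fun u v h => (hinj h).1,
      (avoiders n).nodup.pairwise fun ρ _ ρ' _ hne => Multiset.disjoint_left.2 ?_⟩
    simp only [Multiset.mem_map]
    rintro _ ⟨u, -, rfl⟩ ⟨v, -, h⟩
    exact hne (hinj h).2.symm
  · obtain ⟨⟨u, ρ⟩, rfl⟩ := insertFirst_bijective.surjective ρ
    suffices AvoidsComplements (insertFirst u ρ) ↔ ∃ ρ', AvoidsComplements ρ' ∧
        ∃ v, AvoidsComplements (insertFirst v ρ') ∧ insertFirst v ρ' = insertFirst u ρ by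
      simpa [avoiders, sites]
    refine ⟨fun h => ⟨ρ, (avoidsComplements_insertFirst.1 h).1, u, h, rfl⟩, ?_⟩
    rintro ⟨ρ', -, v, hv, h⟩
    exact h ▸ hv

namespace SiteState

namespace Represents

variable {b : ℕ} {s : SiteState} {ρ : Equiv.Perm (Fin n)}

lemma sites_val_map (h : s.Represents ρ b) :
    (sites ρ).val.map (↑) = (List.range' b (s.word.length + 1) : Multiset ℕ) := by
  have hlength := h.add_length_le
  have hnodup : Multiset.Nodup (List.range' b (s.word.length + 1) : Multiset ℕ) := List.nodup_range'
  refine (Multiset.Nodup.ext ((sites ρ).nodup.map Fin.val_injective) hnodup).2 fun v => ?_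
  suffices (∃ u : Fin (n + 1), (b ≤ u ∧ (u : ℕ) ≤ b + s.word.length) ∧ (u : ℕ) = v) ↔
      b ≤ v ∧ v < b + (s.word.length + 1) by
    simpa [sites, h.avoidsComplements_insertFirst_iff, List.mem_range'_1]
  exact ⟨by rintro ⟨u, hu, rfl⟩; omega, fun hv => ⟨⟨v, by omega⟩, by grind⟩⟩

lemma rel_range'_childrenFrom (h : s.Represents ρ b) {P S : List Bool} {e : ℕ}
    (hword : s.word = P ++ List.replicate e false ++ S) (hP : P.getLast? ≠ some false) :
    Multiset.Rel
      (fun v s' => ∀ u : Fin (n + 1), (u : ℕ) = v → ∃ b', s'.Represents (insertFirst u ρ) b')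
      (List.range' (b + P.length + e) (S.length + 1) : Multiset ℕ)
      (childrenFrom s.ascentOffset s.has321 P.length e S : Multiset SiteState) := by
  induction S generalizing P e with
  | nil => exact .cons (fun u hu => ⟨_, h.childAt hword hP hu⟩) .zero
  | cons a S ih =>
    cases a with
    | false =>
      exact .cons (fun u hu => ⟨_, h.childAt hword hP hu⟩)
        (ih (e := e + 1) (by simp [hword, List.replicate_succ']) hP)
    | true =>
      have htail := ih (P := P ++ List.replicate e false ++ [true]) (e := 0) (by simp [hword])
        (by simp)
      simp only [List.length_append, List.length_replicate, List.length_singleton, ← add_assoc,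
        add_zero] at htail
      exact .cons (fun u hu => ⟨_, h.childAt hword hP hu⟩) htail

lemma rel_children (h : s.Represents ρ b) :
    Multiset.Rel (fun ρ' s' => ∃ b', s'.Represents ρ' b')
      ((sites ρ).val.map fun u => insertFirst u ρ) (s.children : Multiset SiteState) := by
  have hrel := h.rel_range'_childrenFrom (P := []) (e := 0) rfl (by simp)
  simp only [List.length_nil, add_zero] at hrel
  rw [← h.sites_val_map, Multiset.rel_map_left] at hrel
  exact Multiset.rel_map_left.2 (hrel.mono fun u _ s' _ hu => hu u rfl)

end Represents

lemma rel_avoiders_treeLevel (n : ℕ) :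
    Multiset.Rel (fun ρ s => ∃ b, s.Represents ρ b) (avoiders n).val
      (treeLevel children n empty) := by
  induction n with
  | zero =>
    have havoiders : avoiders 0 = {1} := by
      simp [avoiders, (represents_empty 1).avoidsComplements,
        Subsingleton.elim _ (1 : Equiv.Perm (Fin 0))]
    rw [havoiders]
    exact .cons ⟨0, represents_empty 1⟩ .zero
  | succ n ih =>
    rw [avoiders_succ_val]
    exact Multiset.rel_bind (fun _ _ ⟨_, h⟩ => h.rel_children) ih

end SiteState

lemma avoiderGF_eq_treeGF :
    avoiderGF {![2,0,1,3], ![3,0,1,2], ![0,1,3,2]} = treeGF SiteState.children SiteState.empty := by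
  classical
  ext n
  rw [avoiderGF, treeGF, coeff_mk, coeff_mk, avoiderCount_eq_card_avoidsComplements,
    ← Multiset.card_eq_card_of_rel (SiteState.rel_avoiders_treeLevel n), Nat.card_eq_fintype_card,
    Fintype.card_subtype]
  simp only [avoiders, Finset.card_val]

end Avoiders

section Labels

open List SiteState

/-- The word `1 0^q₁ 1 0^q₂ ⋯` with run lengths `q₁, q₂, …`. -/
def runWord : List ℕ → List Bool
  | [] => []
  | q :: Q => true :: (replicate q false ++ runWord Q)

/-- The number of letters `false` since the last `true`, at each site of `runWord Q` after the first
letter. -/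
def runOffsets (Q : List ℕ) : List ℕ := Q.flatMap fun q => range (q + 1)

section ChildrenFrom

variable {t d e : ℕ} (c : Bool)

lemma childrenFrom_runWord_of_le (ht : t ≤ d + e) (q : ℕ) (Q : List ℕ) :
    childrenFrom t c d e (replicate q false ++ runWord Q) =
      (range' e (q + 1)).map (fun r => ⟨replicate r false, t - d, c || decide (0 < d)⟩) ++
        (runOffsets Q).map fun r => ⟨replicate r false, 0, true⟩ := by
  induction Q generalizing d e q with
  | nil =>
    induction q generalizing e with
    | zero => simp [runWord, runOffsets, childrenFrom, childAt, ht]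
    | succ q ih =>
      rw [replicate_succ, cons_append, childrenFrom, ih (by omega), range'_succ (n := q + 1)]
      simp [childAt, ht]
  | cons p Q ihQ =>
    induction q generalizing e with
    | zero =>
      rw [replicate_zero, nil_append, runWord, childrenFrom, ihQ (by omega)]
      simp [childAt, ht, runOffsets, range_eq_range', show t - (d + e + 1) = 0 by omega]
    | succ q ih =>
      rw [replicate_succ, cons_append, childrenFrom, ih (by omega), range'_succ (n := q + 1)]
      simp [childAt, ht]

lemma childrenFrom_runWord_of_eq (ht : t = d + e + 1) (q : ℕ) (Q : List ℕ) :
    childrenFrom t c d e (replicate q false ++ runWord Q) =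
      childAt t c d e (replicate q false ++ runWord Q) ::
        (range' (e + 1) q).map (fun r => ⟨replicate r false, t - d, c || decide (0 < d)⟩) ++
          (runOffsets Q).map fun r => ⟨replicate r false, 0, true⟩ := by
  cases q with
  | zero =>
    cases Q with
    | nil => simp [runWord, runOffsets, childrenFrom]
    | cons p Q =>
      rw [replicate_zero, nil_append, runWord, childrenFrom,
        childrenFrom_runWord_of_le c (by omega)]
      simp [runOffsets, range_eq_range', ht]
  | succ q =>
    rw [replicate_succ, cons_append, childrenFrom, childrenFrom_runWord_of_le c (by omega)]
    simp

end ChildrenFrom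

/-- The states occurring in the generating tree of `SiteState.empty`. A label `free` or `bound`
stands for a permutation without or with a `321`, and its index is the ascent offset. -/
inductive Label
  | root
  | free2 (b : ℕ) (Q : List ℕ)
  | free3 (q : ℕ) (Q : List ℕ)
  | bound2 (q : ℕ) (Q : List ℕ)
  | bound1 (r : ℕ)
  | bound0 (r : ℕ)

namespace Label

/-- The site state named by a label. -/
def toState : Label → SiteState
  | root => SiteState.empty
  | free2 b Q => ⟨replicate (b + 1) false ++ runWord Q, 2, false⟩
  | free3 q Q => ⟨false :: runWord (q :: Q), 3, false⟩
  | bound2 q Q => ⟨runWord (q :: Q), 2, true⟩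
  | bound1 r => ⟨replicate r false, 1, true⟩
  | bound0 r => ⟨replicate r false, 0, true⟩

/-- The succession rule of the generating tree. -/
def children : Label → List Label
  | root => [free2 0 []]
  | free2 b Q =>
    free2 (b + 1) Q :: free3 b Q :: (range' 1 b).map (free2 · []) ++ (runOffsets Q).map bound0
  | free3 q Q =>
    free2 1 (q :: Q) :: free3 0 (q :: Q) :: bound2 q Q :: (range' 1 q).map bound1 ++
      (runOffsets Q).map bound0
  | bound2 q Q =>
    bound2 0 (q :: Q) :: bound2 q Q :: (range' 1 q).map bound1 ++ (runOffsets Q).map bound0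
  | bound1 r => bound2 r [] :: (range' 1 r).map bound1
  | bound0 r => (range (r + 1)).map bound0

lemma children_toState (ℓ : Label) : ℓ.toState.children = ℓ.children.map toState := by
  cases ℓ with
  | root => rfl
  | free2 b Q =>
    have htail := childrenFrom_runWord_of_eq false (t := 2) (d := 0) (e := 1) rfl b Q
    have hshift : range' 2 b = (range' 1 b).map (1 + ·) := (map_add_range' 1 b 1).symm
    simp [SiteState.children, childrenFrom, htail, hshift, children, toState, childAt, runWord,
      replicate_succ, add_comm 1, Function.comp_def]
  | free3 q Q =>
    have htail := childrenFrom_runWord_of_eq false (t := 3) (d := 2) (e := 0) rfl q Q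
    simp [SiteState.children, childrenFrom, htail, children, toState, childAt, runWord,
      Function.comp_def]
  | bound2 q Q =>
    have htail := childrenFrom_runWord_of_eq true (t := 2) (d := 1) (e := 0) rfl q Q
    simp [SiteState.children, childrenFrom, htail, children, toState, childAt, runWord,
      Function.comp_def]
  | bound1 r =>
    have htail := childrenFrom_runWord_of_eq true (t := 1) (d := 0) (e := 0) rfl r []
    simpa [SiteState.children, children, toState, childAt, runWord, runOffsets,
      Function.comp_def] using htail
  | bound0 r =>
    have htail := childrenFrom_runWord_of_le true (t := 0) (d := 0) (e := 0) le_rfl r []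
    simpa [SiteState.children, children, toState, runWord, runOffsets, range_eq_range',
      Function.comp_def] using htail

end Label

lemma avoiderGF_eq_treeGF_root :
    avoiderGF {![2,0,1,3], ![3,0,1,2], ![0,1,3,2]} = treeGF Label.children .root := by
  ext n
  rw [avoiderGF_eq_treeGF, treeGF, treeGF, coeff_mk, coeff_mk, ← Label.toState,
    treeLevel_map Label.children_toState, Multiset.card_map]

end Labels

section ClosedForm

open List

variable {R : Type*} [CommRing R]

lemma mul_sum_map_range'_one {x : R} {f g : ℕ → R} (h : ∀ i, x * f (i + 1) = g (i + 1) - g i)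
    (n : ℕ) : x * ((range' 1 n).map f).sum = g n - g 0 := by
  induction n with
  | zero => simp
  | succ n ih => simp [range'_1_concat, mul_add, ih, add_comm 1, h]

lemma mul_sum_map_range_pow_succ {x y : R} (hy : (1 - x) * y = 1) (n : ℕ) :
    x * ((range n).map fun i => y ^ (i + 1)).sum = y ^ n - 1 := by
  induction n with
  | zero => simp
  | succ n ih =>
    rw [range_succ, map_append, sum_append, map_singleton, sum_singleton, mul_add, ih]
    linear_combination -y ^ n * hy

/-- The contribution of the runs after the first one to the generating function of a label. -/
def runWeight (y : R) (Q : List ℕ) : R := (Q.map fun q => y ^ (q + 1) - 1).sum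

@[simp]
lemma runWeight_nil (y : R) : runWeight y [] = 0 := rfl

lemma runWeight_cons (y : R) (q : ℕ) (Q : List ℕ) :
    runWeight y (q :: Q) = y ^ (q + 1) - 1 + runWeight y Q := by
  simp [runWeight]

lemma mul_sum_map_runOffsets_pow_succ {x y : R} (hy : (1 - x) * y = 1) (Q : List ℕ) :
    x * ((runOffsets Q).map fun r => y ^ (r + 1)).sum = runWeight y Q := by
  induction Q with
  | nil => simp [runOffsets]
  | cons q Q ih =>
    rw [runOffsets, flatMap_cons, map_append, sum_append, mul_add, mul_sum_map_range_pow_succ hy,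
      ← runOffsets, ih, runWeight_cons]

/-- The generating function of `Label.free2 b []`, multiplied by the variable. -/
def free2NilForm (x y z w c : R) (b : ℕ) : R :=
  (1 - 5 * x + 9 * x ^ 2 - 8 * x ^ 3 + 4 * x ^ 4) * z ^ 2 * c ^ (b + 2) - x ^ 2 * z * w * y ^ b -
    (1 - x) * w ^ (b + 1)

/-- The generating functions of the labels, multiplied by the variable `x`, in terms of
`y = 1 / (1 - x)`, `z = 1 / (1 - 2x)`, `w = (1 - x) / (1 - 2x)` and the Catalan series `c`. -/
def closedForm (x y z w c : R) : Label → R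
  | .root => x + x * free2NilForm x y z w c 0
  | .free2 b Q => free2NilForm x y z w c b + x * (1 + x * z * (1 + w)) * runWeight y Q
  | .free3 q Q =>
    free2NilForm x y z w c 0 + x ^ 2 * z ^ 2 * y ^ q + x * w ^ (q + 2) - x * w ^ 2 +
      x * (w + w ^ 2 - 1) * runWeight y Q
  | .bound2 q Q => x * (w ^ (q + 2) + x ^ 3 * y * z ^ 2 + z * runWeight y Q)
  | .bound1 r => x * (w ^ (r + 2) - x * z * y ^ (r + 1))
  | .bound0 r => x * y ^ (r + 1)

variable {x y z w c : R}

lemma sum_closedForm_bound0 (hy : (1 - x) * y = 1) (Q : List ℕ) :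
    ((runOffsets Q).map fun r => closedForm x y z w c (.bound0 r)).sum = runWeight y Q := by
  simp only [closedForm, sum_map_mul_left, mul_sum_map_runOffsets_pow_succ hy]

lemma mul_sum_closedForm_bound1 (hy : (1 - x) * y = 1) (hz : (1 - 2 * x) * z = 1)
    (hw : w = (1 - x) * z) (r : ℕ) :
    x * ((range' 1 r).map fun i => closedForm x y z w c (.bound1 i)).sum =
      x * ((1 - x) * (w ^ (r + 2) - w ^ 2) - x * z * (y ^ (r + 1) - y)) := by
  have htelescope := mul_sum_map_range'_one (x := x) (n := r)
    (f := fun i => closedForm x y z w c (.bound1 i))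
    (g := fun i => x * ((1 - x) * w ^ (i + 2) - x * z * y ^ (i + 1))) fun i => by
      simp only [closedForm, pow_succ]
      grind
  rw [htelescope]
  ring

lemma mul_sum_free2NilForm (hy : (1 - x) * y = 1) (hz : (1 - 2 * x) * z = 1)
    (hw : w = (1 - x) * z) (hc : x * c ^ 2 = c - 1) (b : ℕ) :
    x * ((range' 1 b).map (free2NilForm x y z w c)).sum =
      (1 - 5 * x + 9 * x ^ 2 - 8 * x ^ 3 + 4 * x ^ 4) * z ^ 2 * (c ^ (b + 1) - c) -
        x ^ 2 * z * w * (y ^ b - 1) - (1 - x) ^ 2 * (w ^ (b + 1) - w) := by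
  have htelescope := mul_sum_map_range'_one (x := x) (n := b) (f := free2NilForm x y z w c)
    (g := fun i => (1 - 5 * x + 9 * x ^ 2 - 8 * x ^ 3 + 4 * x ^ 4) * z ^ 2 * c ^ (i + 1) -
      x ^ 2 * z * w * y ^ i - (1 - x) ^ 2 * w ^ (i + 1)) fun i => by
      simp only [free2NilForm, pow_succ]
      grind
  rw [htelescope]
  ring

lemma closedForm_free2_eq_add (hy : (1 - x) * y = 1) (hz : (1 - 2 * x) * z = 1)
    (hw : w = (1 - x) * z) (hc : x * c ^ 2 = c - 1) (b : ℕ) (Q : List ℕ) :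
    closedForm x y z w c (.free2 b Q) =
      x + x * ((Label.free2 b Q).children.map (closedForm x y z w c)).sum := by
  simp only [Label.children, cons_append, map_cons, sum_cons, map_append, sum_append, map_map,
    Function.comp_def, sum_closedForm_bound0 hy Q]
  simp only [closedForm, runWeight_nil, mul_zero, add_zero, mul_add,
    mul_sum_free2NilForm hy hz hw hc b]
  simp only [free2NilForm, pow_succ]
  subst hw
  grind

lemma closedForm_free3_eq_add (hy : (1 - x) * y = 1) (hz : (1 - 2 * x) * z = 1)
    (hw : w = (1 - x) * z) (hc : x * c ^ 2 = c - 1) (q : ℕ) (Q : List ℕ) :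
    closedForm x y z w c (.free3 q Q) =
      x + x * ((Label.free3 q Q).children.map (closedForm x y z w c)).sum := by
  simp only [Label.children, cons_append, map_cons, sum_cons, map_append, sum_append, map_map,
    Function.comp_def, sum_closedForm_bound0 hy Q, mul_add, mul_sum_closedForm_bound1 hy hz hw q]
  simp only [closedForm, runWeight_cons, free2NilForm, pow_succ]
  subst hw
  grind

lemma closedForm_bound2_eq_add (hy : (1 - x) * y = 1) (hz : (1 - 2 * x) * z = 1)
    (hw : w = (1 - x) * z) (q : ℕ) (Q : List ℕ) :
    closedForm x y z w c (.bound2 q Q) =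
      x + x * ((Label.bound2 q Q).children.map (closedForm x y z w c)).sum := by
  simp only [Label.children, cons_append, map_cons, sum_cons, map_append, sum_append, map_map,
    Function.comp_def, sum_closedForm_bound0 hy Q, mul_add, mul_sum_closedForm_bound1 hy hz hw q]
  simp only [closedForm, runWeight_cons, pow_succ]
  subst hw
  grind

lemma closedForm_bound1_eq_add (hy : (1 - x) * y = 1) (hz : (1 - 2 * x) * z = 1)
    (hw : w = (1 - x) * z) (r : ℕ) :
    closedForm x y z w c (.bound1 r) =
      x + x * ((Label.bound1 r).children.map (closedForm x y z w c)).sum := by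
  simp only [Label.children, map_cons, sum_cons, map_map, Function.comp_def, mul_add,
    mul_sum_closedForm_bound1 hy hz hw r]
  simp only [closedForm, runWeight_nil, pow_succ]
  subst hw
  grind

lemma closedForm_bound0_eq_add (hy : (1 - x) * y = 1) (r : ℕ) :
    closedForm x y z w c (.bound0 r) =
      x + x * ((Label.bound0 r).children.map (closedForm x y z w c)).sum := by
  simp only [Label.children, map_map, Function.comp_def, closedForm, sum_map_mul_left,
    mul_sum_map_range_pow_succ hy]
  ring

lemma closedForm_eq_add (hy : (1 - x) * y = 1) (hz : (1 - 2 * x) * z = 1) (hw : w = (1 - x) * z)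
    (hc : x * c ^ 2 = c - 1) :
    ∀ ℓ : Label, closedForm x y z w c ℓ = x + x * (ℓ.children.map (closedForm x y z w c)).sum
  | .root => by simp [Label.children, closedForm]
  | .free2 b Q => closedForm_free2_eq_add hy hz hw hc b Q
  | .free3 q Q => closedForm_free3_eq_add hy hz hw hc q Q
  | .bound2 q Q => closedForm_bound2_eq_add hy hz hw q Q
  | .bound1 r => closedForm_bound1_eq_add hy hz hw r
  | .bound0 r => closedForm_bound0_eq_add hy r

lemma sq_mul_closedForm_root (hz : (1 - 2 * x) * z = 1) (hw : w = (1 - x) * z)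
    (hc : x * c ^ 2 = c - 1) :
    (1 - 2 * x) ^ 2 * closedForm x y z w c .root =
      (1 - 5 * x + 9 * x ^ 2 - 8 * x ^ 3 + 4 * x ^ 4) * c -
        (1 - 5 * x + 9 * x ^ 2 - 6 * x ^ 3 + x ^ 4) := by
  have hz_sq : (1 - 2 * x) ^ 2 * z ^ 2 = 1 := by rw [← mul_pow, hz, one_pow]
  simp only [closedForm, free2NilForm, hw]
  linear_combination
    (x * (1 - 5 * x + 9 * x ^ 2 - 8 * x ^ 3 + 4 * x ^ 4) * c ^ 2 - x ^ 3 * (1 - x)) * hz_sq -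
      x * (1 - x) ^ 2 * (1 - 2 * x) * hz + (1 - 5 * x + 9 * x ^ 2 - 8 * x ^ 3 + 4 * x ^ 4) * hc

end ClosedForm

section PowerSeriesIdentities

lemma X_mul_catalanGF_sq : X * catalanGF ^ 2 = catalanGF - 1 := by
  have hcatalan : catalanGF = PowerSeries.map (Nat.castRingHom ℚ) catalanSeries := by
    ext n
    simp [catalanGF]
  have hsq := congr_arg (PowerSeries.map (Nat.castRingHom ℚ)) catalanSeries_sq_mul_X_add_one
  simp only [map_add, map_mul, map_pow, map_X, map_one, ← hcatalan] at hsq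
  linear_combination hsq

lemma X_mul_treeGF_eq_closedForm {y z : ℚ⟦X⟧} (hy : (1 - X) * y = 1) (hz : (1 - 2 * X) * z = 1)
    (ℓ : Label) :
    X * treeGF Label.children ℓ = closedForm X y z ((1 - X) * z) catalanGF ℓ := by
  refine congr_fun (eq_of_eq_add_X_mul_sum_children (f := fun _ => X)
    (g := fun ℓ => X * treeGF Label.children ℓ) (fun ℓ => ?_)
    (closedForm_eq_add hy hz rfl X_mul_catalanGF_sq)) ℓ
  rw [treeGF_eq_one_add, List.sum_map_mul_left]
  ring

end PowerSeriesIdentities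

theorem statement_14 :
    (X : PowerSeries ℚ) * (1 - 2*X)^2 * avoiderGF ({![2,0,1,3], ![3,0,1,2], ![0,1,3,2]} : Set (Fin 4 → Fin 4)) =
      (1 - 5*X + 9*X^2 - 8*X^3 + 4*X^4) * catalanGF - (1 - 5*X + 9*X^2 - 6*X^3 + X^4) := by
  obtain ⟨y, hy⟩ : ∃ y : ℚ⟦X⟧, (1 - X) * y = 1 := ⟨_, PowerSeries.mul_inv_cancel _ (by simp)⟩
  obtain ⟨z, hz⟩ : ∃ z : ℚ⟦X⟧, (1 - 2 * X) * z = 1 := ⟨_, PowerSeries.mul_inv_cancel _ (by simp)⟩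
  rw [avoiderGF_eq_treeGF_root, ← sq_mul_closedForm_root hz rfl X_mul_catalanGF_sq,
    ← X_mul_treeGF_eq_closedForm hy hz]
  ring
end

section
/- Let T = {1243, 1423, 2314} (patterns of length 4). Then the generating function for T-avoiders satisfies, as formal power series over ℚ, (x·(2x^2-2x+1)·C(x) - (1-x)·(3x^2-3x+1))·F_T(x) = x·(2x^2-2x+1)·C(x) - (3x^2-3x+1), where C(x) is the Catalan number generating function. -/
open PowerSeries

/-!
Turning diagrams by 180 degrees replaces the patterns by 2134, 2314 and 1423, and permutations
avoiding these are grown one letter at a time by inserting a new maximum. The sites where this is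
allowed are *active*, and the active sites after an insertion at site `j` are determined by the
skew decompositions (to the left of `j`) and direct decompositions (to the right) of prefixes at
the old ones. Three kinds of words suffice to describe the resulting generating tree, and a word of
each kind matters only through at most two integer parameters. The corresponding generating
functions satisfy a linear system whose solution is geometric with ratio `C` in one parameter and
affine in the other, because `C = 1 + X * C ^ 2`.
-/

namespace TripleAvoidance

/-- The first `n` letters of the word `f` avoid 2134, 2314 and 1423, the reverse complements of
1243, 1423 and 2314. Words are functions on all of `ℕ`; only the first `n` letters matter. -/
structure AvoidsTriple (f : ℕ → ℕ) (n : ℕ) : Prop where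
  not_2134 : ∀ ⦃a b c d⦄, a < b → b < c → c < d → d < n → ¬(f b < f a ∧ f a < f c ∧ f c < f d)
  not_2314 : ∀ ⦃a b c d⦄, a < b → b < c → c < d → d < n → ¬(f c < f a ∧ f a < f b ∧ f b < f d)
  not_1423 : ∀ ⦃a b c d⦄, a < b → b < c → c < d → d < n → ¬(f a < f c ∧ f c < f d ∧ f d < f b)

/-- Site `j` of the word `f` of length `n` is active: a new maximum can be inserted just before the
letter of index `j` (at the end if `j = n`) without completing one of 2134, 2314, 1423. The three
conditions come from deleting the letter 4 from each of the patterns. -/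
structure IsActive (f : ℕ → ℕ) (n j : ℕ) : Prop where
  le : j ≤ n
  not_213 : ∀ ⦃a b c⦄, a < b → b < c → c < j → ¬(f b < f a ∧ f a < f c)
  not_231 : ∀ ⦃a b c⦄, a < b → b < c → c < j → ¬(f c < f a ∧ f a < f b)
  not_123 : ∀ ⦃a b c⦄, a < j → j ≤ b → b < c → c < n → ¬(f a < f b ∧ f b < f c)

/-- The first `n` letters of `f` are a permutation of `0, …, n - 1`. -/
structure IsPermWord (f : ℕ → ℕ) (n : ℕ) : Prop where
  lt : ∀ ⦃i⦄, i < n → f i < n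
  injOn : Set.InjOn f (Set.Iio n)

/-- Site `i` splits the prefix of length `j` as a skew sum: every letter before `i` exceeds every
letter from `i` on. -/
def SkewCut (f : ℕ → ℕ) (i j : ℕ) : Prop := ∀ ⦃a b⦄, a < i → i ≤ b → b < j → f b < f a

/-- Site `i` splits the prefix of length `j` as a direct sum: every letter before `i` is below every
letter from `i` on. -/
def DirectCut (f : ℕ → ℕ) (i j : ℕ) : Prop := ∀ ⦃a b⦄, a < i → i ≤ b → b < j → f a < f b

/-- The word `f` with the letter `v` inserted so that it gets index `j`. -/
def insertAt (f : ℕ → ℕ) (j v : ℕ) : ℕ → ℕ := fun i ↦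
  if i < j then f i else if i = j then v else f (i - 1)

/-- The index that letter `i` of a word gets once a letter has been inserted at index `j`; the
`ℕ`-valued `Fin.succAbove`. -/
def skip (j i : ℕ) : ℕ := if i < j then i else i + 1

/-! ### Inserting a new maximum -/

section insertAt

variable {f : ℕ → ℕ} {a b i j n v : ℕ}

@[simp] lemma insertAt_self : insertAt f j v j = v := by simp [insertAt]

@[simp] lemma insertAt_skip : insertAt f j v (skip j i) = f i := by grind [insertAt, skip]

lemma insertAt_of_lt (h : i < j) : insertAt f j v i = f i := if_pos h

lemma exists_eq_skip_of_ne (h : i ≠ j) : ∃ a, i = skip j a := by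
  rcases h.lt_or_gt with h | h
  · exact ⟨i, (if_pos h).symm⟩
  · exact ⟨i - 1, by grind [skip]⟩

lemma exists_eq_skip_of_insertAt_ne (h : insertAt f j v i ≠ v) : ∃ a, i = skip j a :=
  exists_eq_skip_of_ne (by rintro rfl; exact h insertAt_self)

lemma skip_lt_skip : skip j a < skip j b ↔ a < b := by grind [skip]

lemma skip_lt_self : skip j a < j ↔ a < j := by grind [skip]

lemma self_lt_skip : j < skip j a ↔ j ≤ a := by grind [skip]

lemma skip_lt_of_le (h : i ≤ j) : skip j a < i ↔ a < i := by grind [skip]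

lemma skip_lt_succ (h : j ≤ i) : skip j a < i + 1 ↔ a < i := by grind [skip]

lemma le_skip_of_le (h : i ≤ j) : i ≤ skip j a ↔ i ≤ a := by grind [skip]

lemma succ_le_skip (h : j ≤ i) : i + 1 ≤ skip j a ↔ i ≤ a := by grind [skip]

lemma IsPermWord.insertMax (hf : IsPermWord f n) (hj : j ≤ n) :
    IsPermWord (insertAt f j n) (n + 1) where
  lt i hi := by
    rcases eq_or_ne i j with rfl | hne
    · simp
    · obtain ⟨a, rfl⟩ := exists_eq_skip_of_ne hne
      have := hf.lt ((skip_lt_succ hj).1 hi)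
      simpa using this.le
  injOn a ha b hb hab := by
    have eq_of_eq_max {i} (hi : i < n + 1) (h : insertAt f j n i = n) : i = j := by
      by_contra hne
      obtain ⟨a, rfl⟩ := exists_eq_skip_of_ne hne
      exact (hf.lt ((skip_lt_succ hj).1 hi)).ne (by simpa using h)
    by_cases h : insertAt f j n b = n
    · exact (eq_of_eq_max ha (hab.trans h)).trans (eq_of_eq_max hb h).symm
    · obtain ⟨a, rfl⟩ := exists_eq_skip_of_insertAt_ne (hab ▸ h)
      obtain ⟨b, rfl⟩ := exists_eq_skip_of_insertAt_ne h
      rw [hf.injOn ((skip_lt_succ hj).1 ha) ((skip_lt_succ hj).1 hb) (by simpa using hab)]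

lemma IsPermWord.exists_eq_skip (hf : IsPermWord f n) (hj : j ≤ n) (hb : b < n + 1)
    (hab : insertAt f j n a < insertAt f j n b) : ∃ i, a = skip j i :=
  exists_eq_skip_of_insertAt_ne (hab.trans_le (Nat.lt_succ_iff.1 ((hf.insertMax hj).lt hb))).ne

lemma AvoidsTriple.of_insertAt (hj : j ≤ n) (h : AvoidsTriple (insertAt f j n) (n + 1)) :
    AvoidsTriple f n where
  not_2134 a b c d hab hbc hcd hd := by
    simpa using h.not_2134 (skip_lt_skip.2 hab) (skip_lt_skip.2 hbc) (skip_lt_skip.2 hcd)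
      ((skip_lt_succ hj).2 hd)
  not_2314 a b c d hab hbc hcd hd := by
    simpa using h.not_2314 (skip_lt_skip.2 hab) (skip_lt_skip.2 hbc) (skip_lt_skip.2 hcd)
      ((skip_lt_succ hj).2 hd)
  not_1423 a b c d hab hbc hcd hd := by
    simpa using h.not_1423 (skip_lt_skip.2 hab) (skip_lt_skip.2 hbc) (skip_lt_skip.2 hcd)
      ((skip_lt_succ hj).2 hd)

lemma AvoidsTriple.isActive_of_insertAt (hf : IsPermWord f n) (hj : j ≤ n)
    (h : AvoidsTriple (insertAt f j n) (n + 1)) : IsActive f n j where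
  le := hj
  not_213 a b c hab hbc hc hval :=
    h.not_2134 (skip_lt_skip.2 hab) (skip_lt_skip.2 hbc) (skip_lt_self.2 hc) (by lia)
      (by simpa using ⟨hval.1, hval.2, hf.lt (hc.trans_le hj)⟩)
  not_231 a b c hab hbc hc hval :=
    h.not_2314 (skip_lt_skip.2 hab) (skip_lt_skip.2 hbc) (skip_lt_self.2 hc) (by lia)
      (by simpa using ⟨hval.1, hval.2, hf.lt (by lia)⟩)
  not_123 a b c ha hb hbc hc hval :=
    h.not_1423 (skip_lt_self.2 ha) (self_lt_skip.2 hb) (skip_lt_skip.2 hbc)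
      ((skip_lt_succ hj).2 hc) (by simpa using ⟨hval.1, hval.2, hf.lt hc⟩)

lemma AvoidsTriple.insertMax (hf : IsPermWord f n) (h : AvoidsTriple f n) (hj : IsActive f n j) :
    AvoidsTriple (insertAt f j n) (n + 1) := by
  constructor <;> intro a b c d hab hbc hcd hd ⟨h₁, h₂, h₃⟩
  · obtain ⟨c, rfl⟩ := hf.exists_eq_skip hj.le hd h₃
    obtain ⟨a, rfl⟩ := hf.exists_eq_skip hj.le (hcd.trans hd) h₂
    obtain ⟨b, rfl⟩ := hf.exists_eq_skip hj.le (by lia) h₁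
    simp only [insertAt_skip, skip_lt_skip] at h₁ h₂ hab hbc
    rcases eq_or_ne d j with rfl | hne
    · exact hj.not_213 hab hbc (skip_lt_self.1 hcd) ⟨h₁, h₂⟩
    · obtain ⟨d, rfl⟩ := exists_eq_skip_of_ne hne
      exact h.not_2134 hab hbc (skip_lt_skip.1 hcd) ((skip_lt_succ hj.le).1 hd)
        ⟨h₁, h₂, by simpa using h₃⟩
  · obtain ⟨b, rfl⟩ := hf.exists_eq_skip hj.le hd h₃
    obtain ⟨a, rfl⟩ := hf.exists_eq_skip hj.le (by lia) h₂
    obtain ⟨c, rfl⟩ := hf.exists_eq_skip hj.le (by lia) h₁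
    simp only [insertAt_skip, skip_lt_skip] at h₁ h₂ hab hbc
    rcases eq_or_ne d j with rfl | hne
    · exact hj.not_231 hab hbc (skip_lt_self.1 hcd) ⟨h₁, h₂⟩
    · obtain ⟨d, rfl⟩ := exists_eq_skip_of_ne hne
      exact h.not_2314 hab hbc (skip_lt_skip.1 hcd) ((skip_lt_succ hj.le).1 hd)
        ⟨h₁, h₂, by simpa using h₃⟩
  · obtain ⟨d, rfl⟩ := hf.exists_eq_skip hj.le (by lia) h₃
    obtain ⟨c, rfl⟩ := hf.exists_eq_skip hj.le hd h₂
    obtain ⟨a, rfl⟩ := hf.exists_eq_skip hj.le (by lia) h₁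
    simp only [insertAt_skip, skip_lt_skip, skip_lt_succ hj.le] at h₁ h₂ hcd hd
    rcases eq_or_ne b j with rfl | hne
    · exact hj.not_123 (skip_lt_self.1 hab) (self_lt_skip.1 hbc) hcd hd ⟨h₁, h₂⟩
    · obtain ⟨b, rfl⟩ := exists_eq_skip_of_ne hne
      exact h.not_1423 (skip_lt_skip.1 hab) (skip_lt_skip.1 hbc) hcd hd ⟨h₁, h₂, by simpa using h₃⟩

lemma avoidsTriple_insertAt_iff (hf : IsPermWord f n) (hj : j ≤ n) :
    AvoidsTriple (insertAt f j n) (n + 1) ↔ AvoidsTriple f n ∧ IsActive f n j :=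
  ⟨fun h ↦ ⟨h.of_insertAt hj, h.isActive_of_insertAt hf hj⟩, fun h ↦ h.1.insertMax hf h.2⟩

lemma isActive_insertAt_iff_of_le (hf : IsPermWord f n) (hj : j ≤ n) (hi : i ≤ j) :
    IsActive (insertAt f j n) (n + 1) i ↔ IsActive f n i ∧ SkewCut f i j := by
  constructor
  · refine fun h ↦ ⟨⟨hi.trans hj, fun a b c hab hbc hc ↦ ?_, fun a b c hab hbc hc ↦ ?_,
      fun a b c ha hb hbc hc ↦ ?_⟩, fun a b ha hb hbj ↦ ?_⟩
    · simpa using h.not_213 (skip_lt_skip.2 hab) (skip_lt_skip.2 hbc) ((skip_lt_of_le hi).2 hc)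
    · simpa using h.not_231 (skip_lt_skip.2 hab) (skip_lt_skip.2 hbc) ((skip_lt_of_le hi).2 hc)
    · simpa using h.not_123 ((skip_lt_of_le hi).2 ha) ((le_skip_of_le hi).2 hb)
        (skip_lt_skip.2 hbc) ((skip_lt_succ hj).2 hc)
    · have hle : ¬(f a < f b ∧ f b < n) := by
        simpa using h.not_123 ((skip_lt_of_le hi).2 ha) ((le_skip_of_le hi).2 hb)
          (skip_lt_self.2 hbj) (Nat.lt_succ_of_le hj)
      have hne := hf.injOn.ne (show a < n by lia) (show b < n by lia) (by lia)
      have hlt := hf.lt (hbj.trans_le hj)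
      lia
  · rintro ⟨h, hcut⟩
    refine ⟨by lia, fun a b c hab hbc hc ↦ ?_, fun a b c hab hbc hc ↦ ?_,
      fun a b c ha hb hbc hc ⟨h₁, h₂⟩ ↦ ?_⟩
    · simpa [insertAt_of_lt (hc.trans_le hi), insertAt_of_lt (show b < j by lia),
        insertAt_of_lt (show a < j by lia)] using h.not_213 hab hbc hc
    · simpa [insertAt_of_lt (hc.trans_le hi), insertAt_of_lt (show b < j by lia),
        insertAt_of_lt (show a < j by lia)] using h.not_231 hab hbc hc
    · obtain ⟨b, rfl⟩ := hf.exists_eq_skip hj hc h₂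
      obtain ⟨a, rfl⟩ := hf.exists_eq_skip hj (by lia) h₁
      simp only [insertAt_skip, skip_lt_of_le hi, le_skip_of_le hi] at h₁ ha hb
      rcases eq_or_ne c j with rfl | hne
      · exact (hcut ha hb (skip_lt_self.1 hbc)).asymm h₁
      · obtain ⟨c, rfl⟩ := exists_eq_skip_of_ne hne
        exact h.not_123 ha hb (skip_lt_skip.1 hbc) ((skip_lt_succ hj).1 hc) ⟨h₁, by simpa using h₂⟩

lemma isActive_of_isActive_insertAt_succ (hij : j ≤ i)
    (h : IsActive (insertAt f j n) (n + 1) (i + 1)) : IsActive f n i where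
  le := Nat.le_of_succ_le_succ h.le
  not_213 a b c hab hbc hc := by
    simpa using h.not_213 (skip_lt_skip.2 hab) (skip_lt_skip.2 hbc) ((skip_lt_succ hij).2 hc)
  not_231 a b c hab hbc hc := by
    simpa using h.not_231 (skip_lt_skip.2 hab) (skip_lt_skip.2 hbc) ((skip_lt_succ hij).2 hc)
  not_123 a b c ha hb hbc hc := by
    simpa using h.not_123 ((skip_lt_succ hij).2 ha) ((succ_le_skip hij).2 hb)
      (skip_lt_skip.2 hbc) ((skip_lt_succ (by have := h.le; lia)).2 hc)

lemma IsActive.insertMax_succ (hf : IsPermWord f n) (hij : j ≤ i) (h : IsActive f n i)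
    (hcut : DirectCut f j i) (hmono : StrictMonoOn f (Set.Iio j)) :
    IsActive (insertAt f j n) (n + 1) (i + 1) := by
  have hj := hij.trans h.le
  have hi := h.le
  refine ⟨by lia, fun a b c hab hbc hc ⟨h₁, h₂⟩ ↦ ?_, fun a b c hab hbc hc ⟨h₁, h₂⟩ ↦ ?_,
    fun a b c ha hb hbc hc ⟨h₁, h₂⟩ ↦ ?_⟩
  · obtain ⟨a, rfl⟩ := hf.exists_eq_skip hj (by lia) h₂
    obtain ⟨b, rfl⟩ := hf.exists_eq_skip hj (by lia) h₁
    simp only [insertAt_skip, skip_lt_skip] at h₁ hab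
    rcases eq_or_ne c j with rfl | hne
    · have hb := skip_lt_self.1 hbc
      exact (hmono (hab.trans hb) hb hab).asymm h₁
    · obtain ⟨c, rfl⟩ := exists_eq_skip_of_ne hne
      exact h.not_213 hab (skip_lt_skip.1 hbc) ((skip_lt_succ hij).1 hc) ⟨h₁, by simpa using h₂⟩
  · obtain ⟨a, rfl⟩ := hf.exists_eq_skip hj (by lia) h₂
    obtain ⟨c, rfl⟩ := hf.exists_eq_skip hj (by lia) h₁
    simp only [insertAt_skip, skip_lt_succ hij] at h₁ hc
    rcases eq_or_ne b j with rfl | hne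
    · exact (hcut (skip_lt_self.1 hab) (self_lt_skip.1 hbc) hc).asymm h₁
    · obtain ⟨b, rfl⟩ := exists_eq_skip_of_ne hne
      exact h.not_231 (skip_lt_skip.1 hab) (skip_lt_skip.1 hbc) hc ⟨h₁, by simpa using h₂⟩
  · obtain ⟨b, rfl⟩ := hf.exists_eq_skip hj hc h₂
    obtain ⟨a, rfl⟩ := hf.exists_eq_skip hj (by lia) h₁
    obtain ⟨c, rfl⟩ := exists_eq_skip_of_ne (show c ≠ j by lia)
    simp only [insertAt_skip] at h₁ h₂
    exact h.not_123 ((skip_lt_succ hij).1 ha) ((succ_le_skip hij).1 hb) (skip_lt_skip.1 hbc)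
      ((skip_lt_succ hj).1 hc) ⟨h₁, h₂⟩

lemma isActive_insertAt_succ_iff (hf : IsPermWord f n) (hij : j ≤ i) :
    IsActive (insertAt f j n) (n + 1) (i + 1) ↔
      IsActive f n i ∧ DirectCut f j i ∧ StrictMonoOn f (Set.Iio j) := by
  refine ⟨fun h ↦ ?_, fun ⟨h, hcut, hmono⟩ ↦ h.insertMax_succ hf hij hcut hmono⟩
  have hi := Nat.le_of_succ_le_succ h.le
  refine ⟨isActive_of_isActive_insertAt_succ hij h, fun a b ha hjb hbi ↦ ?_, fun a ha b hb hab ↦ ?_⟩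
  · have hle : ¬(f b < f a ∧ f a < n) := by
      simpa using h.not_231 (skip_lt_self.2 ha) (self_lt_skip.2 hjb) ((skip_lt_succ hij).2 hbi)
    have hne := hf.injOn.ne (show a < n by lia) (show b < n by lia) (by lia)
    have hlt := hf.lt (show a < n by lia)
    lia
  · have hle : ¬(f b < f a ∧ f a < n) := by
      simpa using h.not_213 (skip_lt_skip.2 hab) (skip_lt_self.2 hb) (Nat.lt_succ_of_le hij)
    rw [Set.mem_Iio] at ha hb
    have hne := hf.injOn.ne (show a < n by lia) (show b < n by lia) hab.ne
    have hlt := hf.lt (show a < n by lia)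
    lia

lemma isActive_insertAt_iff (hf : IsPermWord f n) (hj : j ≤ n) :
    IsActive (insertAt f j n) (n + 1) i ↔
      (i ≤ j ∧ IsActive f n i ∧ SkewCut f i j) ∨
        ∃ k, i = k + 1 ∧ j ≤ k ∧ IsActive f n k ∧ DirectCut f j k ∧ StrictMonoOn f (Set.Iio j) := by
  constructor
  · intro h
    rcases le_or_gt i j with hij | hji
    · exact .inl ⟨hij, (isActive_insertAt_iff_of_le hf hj hij).1 h⟩
    · obtain ⟨k, rfl⟩ : ∃ k, i = k + 1 := ⟨i - 1, by lia⟩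
      have hjk := Nat.lt_succ_iff.1 hji
      exact .inr ⟨k, rfl, hjk, (isActive_insertAt_succ_iff hf hjk).1 h⟩
  · rintro (⟨hij, h⟩ | ⟨k, rfl, hjk, h⟩)
    · exact (isActive_insertAt_iff_of_le hf hj hij).2 h
    · exact (isActive_insertAt_succ_iff hf hjk).2 h

end insertAt

/-! ### Cuts of a prefix -/

section cuts

variable {f : ℕ → ℕ} {i j k n : ℕ}

lemma skewCut_zero : SkewCut f 0 j := fun _ _ h ↦ absurd h (Nat.not_lt_zero _)

lemma skewCut_self : SkewCut f j j := fun _ _ _ h₁ h₂ ↦ absurd h₁ h₂.not_ge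

lemma directCut_zero : DirectCut f 0 j := fun _ _ h ↦ absurd h (Nat.not_lt_zero _)

lemma directCut_self : DirectCut f j j := fun _ _ _ h₁ h₂ ↦ absurd h₁ h₂.not_ge

lemma directCut_of_strictMonoOn (h : StrictMonoOn f (Set.Iio j)) : DirectCut f i j :=
  fun _ _ ha hb hbj ↦ h ((ha.trans_le hb).trans hbj) hbj (ha.trans_le hb)

lemma IsActive.not_skewCut_of_ascent (hj : IsActive f n j) (hasc : f 0 < f 1) (hi : 0 < i)
    (hij : i < j) : ¬SkewCut f i j := by
  intro hcut
  have hlast : f i < f 0 := hcut hi le_rfl hij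
  rcases Nat.lt_or_ge 1 i with hi' | hi'
  · exact hj.not_231 one_pos hi' hij ⟨hlast, hasc⟩
  · obtain rfl : i = 1 := by lia
    exact hlast.asymm hasc

lemma eqOn_insertAt : Set.EqOn (insertAt f j n) f (Set.Iio j) := fun _ ↦ insertAt_of_lt

lemma skewCut_insertAt_iff_of_le (hkj : k ≤ j) : SkewCut (insertAt f j n) i k ↔ SkewCut f i k := by
  refine forall₂_congr fun a b ↦ forall₃_congr fun ha hb hbk ↦ ?_
  rw [insertAt_of_lt (show a < j by lia), insertAt_of_lt (show b < j by lia)]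

lemma skewCut_insertAt_zero_iff (hf : IsPermWord f n) (hj : j ≤ n) :
    SkewCut (insertAt f 0 n) (i + 1) (j + 1) ↔ SkewCut f i j := by
  constructor <;> intro h a b ha hb hbj
  · simpa [insertAt] using @h (a + 1) (b + 1) (by lia) (by lia) (by lia)
  · obtain ⟨b, rfl⟩ : ∃ b', b = b' + 1 := ⟨b - 1, by lia⟩
    cases a with
    | zero => simpa [insertAt] using hf.lt (show b < n by lia)
    | succ a => simpa [insertAt] using @h a b (by lia) (by lia) (by lia)

lemma DirectCut.insertMax (hf : IsPermWord f n) (hj : j ≤ n) (h : DirectCut f j k) :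
    DirectCut (insertAt f j n) j (k + 1) := by
  intro a b ha hb hbk
  rw [insertAt_of_lt ha]
  rcases eq_or_ne b j with rfl | hne
  · simpa using hf.lt (ha.trans_le hj)
  · obtain ⟨b, rfl⟩ := exists_eq_skip_of_ne hne
    rw [insertAt_skip]
    exact h ha ((le_skip_of_le le_rfl).1 hb) ((skip_lt_succ (by grind [skip])).1 hbk)

lemma strictMonoOn_insertMax (hf : IsPermWord f n) (hj : j ≤ n) (h : StrictMonoOn f (Set.Iio j)) :
    StrictMonoOn (insertAt f j n) (Set.Iio (j + 1)) := by
  intro a ha b hb hab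
  rw [Set.mem_Iio, Nat.lt_succ_iff] at hb
  rw [insertAt_of_lt (hab.trans_le hb)]
  rcases hb.eq_or_lt with rfl | hb
  · simpa using hf.lt (hab.trans_le hj)
  · simpa [insertAt_of_lt hb] using h (hab.trans hb) hb hab

lemma isActive_insertAt_iff_of_not_strictMonoOn (hf : IsPermWord f n) (hj : j ≤ n)
    (h : ¬StrictMonoOn f (Set.Iio j)) :
    IsActive (insertAt f j n) (n + 1) i ↔ i ≤ j ∧ IsActive f n i ∧ SkewCut f i j := by
  simp [isActive_insertAt_iff hf hj, h]

lemma isActive_insertAt_zero_iff (hf : IsPermWord f n) (h₀ : IsActive f n 0) :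
    IsActive (insertAt f 0 n) (n + 1) i ↔ i = 0 ∨ ∃ k, i = k + 1 ∧ IsActive f n k := by
  rw [isActive_insertAt_iff hf (Nat.zero_le n)]
  refine or_congr ⟨fun h ↦ Nat.le_zero.1 h.1, ?_⟩ (exists_congr fun k ↦ and_congr_right fun _ ↦ ?_)
  · rintro rfl
    exact ⟨le_rfl, h₀, skewCut_self⟩
  · simp [directCut_zero, StrictMonoOn]

end cuts

/-! ### States -/

/-- A word whose active sites are `0, …, r - 1` and a set `M` of later sites, where an active site
splits the prefixes ending at the later active sites as skew sums if and only if it is below `r`. -/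
structure SkewState (f : ℕ → ℕ) (n r : ℕ) (M : Finset ℕ) : Prop where
  isPermWord : IsPermWord f n
  pos : 0 < r
  isActive_iff : ∀ i, IsActive f n i ↔ i < r ∨ i ∈ M
  le_of_mem : ∀ i ∈ M, r ≤ i
  skewCut_iff : ∀ ⦃i j⦄, IsActive f n i → IsActive f n j → i < j → (SkewCut f i j ↔ i < r)

/-- A word starting with `p + 1 ≥ 2` increasing letters, whose active sites are `0`, `p`, `p + 1`
and a set `M` of later sites, where `p` splits the prefixes ending at `M` as direct sums but `p + 1`
does not. So `M` stays active after an insertion at `p`, but not after one at `p + 1`. -/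
structure AscentState (f : ℕ → ℕ) (n p : ℕ) (M : Finset ℕ) : Prop where
  isPermWord : IsPermWord f n
  pos : 0 < p
  isActive_iff : ∀ i, IsActive f n i ↔ i = 0 ∨ i = p ∨ i = p + 1 ∨ i ∈ M
  lt_of_mem : ∀ i ∈ M, p + 1 < i
  strictMonoOn : StrictMonoOn f (Set.Iio (p + 1))
  directCut : ∀ i ∈ M, DirectCut f p i
  not_directCut : ∀ i ∈ M, ¬DirectCut f (p + 1) i

/-- A word whose only active sites are `0` and `j`, with a descent before `j`; inserting at `j`
leaves this situation unchanged. -/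
structure RigidState (f : ℕ → ℕ) (n j : ℕ) : Prop where
  isPermWord : IsPermWord f n
  isActive_iff : ∀ i, IsActive f n i ↔ i = 0 ∨ i = j
  not_strictMonoOn : ¬StrictMonoOn f (Set.Iio j)

section states

variable {f : ℕ → ℕ} {i j n p r : ℕ} {M : Finset ℕ}

lemma ascentState_insertAt (hf : IsPermWord f n) (h₀ : IsActive f n 0) (hj : IsActive f n j)
    (hpos : 0 < j) (hmono : StrictMonoOn f (Set.Iio j))
    (hlow : ∀ i, 0 < i → i < j → IsActive f n i → ¬SkewCut f i j)
    (hM : ∀ k, k ∈ M ↔ j < k ∧ IsActive f n k ∧ DirectCut f j k) :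
    AscentState (insertAt f j n) (n + 1) j (M.map (addRightEmbedding 1)) where
  isPermWord := hf.insertMax hj.le
  pos := hpos
  isActive_iff i := by
    rw [isActive_insertAt_iff hf hj.le]
    simp only [Finset.mem_map, addRightEmbedding_apply, hM]
    constructor
    · rintro (⟨hij, hi, hcut⟩ | ⟨k, rfl, hjk, hk, hcut, -⟩)
      · have := fun h₁ h₂ ↦ hlow i h₁ h₂ hi hcut
        lia
      · rcases hjk.eq_or_lt with rfl | hjk
        · simp
        · exact .inr (.inr (.inr ⟨k, ⟨hjk, hk, hcut⟩, rfl⟩))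
    · rintro (rfl | rfl | rfl | ⟨k, ⟨hjk, hk, hcut⟩, rfl⟩)
      · exact .inl ⟨hpos.le, h₀, skewCut_zero⟩
      · exact .inl ⟨le_rfl, hj, skewCut_self⟩
      · exact .inr ⟨j, rfl, le_rfl, hj, directCut_self, hmono⟩
      · exact .inr ⟨k, rfl, hjk.le, hk, hcut, hmono⟩
  lt_of_mem := by
    simp only [Finset.mem_map, hM]
    rintro _ ⟨k, ⟨hjk, -⟩, rfl⟩
    exact Nat.succ_lt_succ hjk
  strictMonoOn := strictMonoOn_insertMax hf hj.le hmono
  directCut := by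
    simp only [Finset.mem_map, hM]
    rintro _ ⟨k, ⟨-, -, hcut⟩, rfl⟩
    exact hcut.insertMax hf hj.le
  not_directCut := by
    simp only [Finset.mem_map, hM]
    rintro _ ⟨k, ⟨hjk, hk, -⟩, rfl⟩ hcut
    have hlt : n < f j := by
      simpa [insertAt] using hcut j.lt_succ_self le_rfl (Nat.succ_lt_succ hjk)
    exact hlt.asymm (hf.lt (hjk.trans_le hk.le))

lemma rigidState_insertAt (hf : IsPermWord f n) (h₀ : IsActive f n 0) (hj : IsActive f n j)
    (hmono : ¬StrictMonoOn f (Set.Iio j))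
    (hlow : ∀ i, 0 < i → i < j → IsActive f n i → ¬SkewCut f i j) :
    RigidState (insertAt f j n) (n + 1) j where
  isPermWord := hf.insertMax hj.le
  isActive_iff i := by
    rw [isActive_insertAt_iff_of_not_strictMonoOn hf hj.le hmono]
    constructor
    · rintro ⟨hij, hi, hcut⟩
      have := fun h₁ h₂ ↦ hlow i h₁ h₂ hi hcut
      lia
    · rintro (rfl | rfl)
      · exact ⟨Nat.zero_le j, h₀, skewCut_zero⟩
      · exact ⟨le_rfl, hj, skewCut_self⟩
  not_strictMonoOn h := hmono (h.congr eqOn_insertAt)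

namespace SkewState

lemma isActive_of_lt (h : SkewState f n r M) (hi : i < r) : IsActive f n i :=
  (h.isActive_iff i).2 (.inl hi)

lemma insert_zero (h : SkewState f n r M) :
    SkewState (insertAt f 0 n) (n + 1) (r + 1) (M.map (addRightEmbedding 1)) where
  isPermWord := h.isPermWord.insertMax (Nat.zero_le n)
  pos := r.succ_pos
  isActive_iff i := by
    rw [isActive_insertAt_zero_iff h.isPermWord (h.isActive_of_lt h.pos)]
    cases i <;> simp [h.isActive_iff]
  le_of_mem := by simpa using h.le_of_mem
  skewCut_iff i j hi hj hij := by
    rw [isActive_insertAt_zero_iff h.isPermWord (h.isActive_of_lt h.pos)] at hi hj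
    obtain ⟨j, rfl, hj'⟩ := hj.resolve_left (Nat.ne_zero_of_lt hij)
    rcases hi with rfl | ⟨i, rfl, hi⟩
    · simp [skewCut_zero]
    · rw [skewCut_insertAt_zero_iff h.isPermWord hj'.le,
        h.skewCut_iff hi hj' (Nat.lt_of_succ_lt_succ hij), Nat.succ_lt_succ_iff]

lemma apply_one_lt_apply_zero (h : SkewState f n r M) (hr : 2 ≤ r) (hj : IsActive f n j)
    (hj₂ : 2 ≤ j) : f 1 < f 0 :=
  (h.skewCut_iff (h.isActive_of_lt hr) hj hj₂).2 hr one_pos le_rfl hj₂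

lemma insert_one (h : SkewState f n r M) (hr : 2 ≤ r) :
    AscentState (insertAt f 1 n) (n + 1) 1 ∅ := by
  refine ascentState_insertAt (M := ∅) h.isPermWord (h.isActive_of_lt h.pos) (h.isActive_of_lt hr)
    one_pos (fun a _ b hb hab ↦ ?_) (fun i hi hi' ↦ by lia) fun k ↦ ?_
  · rw [Set.mem_Iio] at hb
    lia
  · refine iff_of_false (Finset.notMem_empty k) fun ⟨hk, hactive, hcut⟩ ↦ ?_
    exact (h.apply_one_lt_apply_zero hr hactive hk).asymm (hcut one_pos le_rfl hk)

lemma insert_of_two_le (h : SkewState f n r M) (hr : 2 ≤ r) (hj : IsActive f n j) (hj₂ : 2 ≤ j) :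
    SkewState (insertAt f j n) (n + 1) (min r j) {j} := by
  have hmono : ¬StrictMonoOn f (Set.Iio j) := fun hmono ↦
    (h.apply_one_lt_apply_zero hr hj hj₂).asymm
      (hmono (Nat.zero_lt_of_lt hj₂) hj₂ one_pos)
  have hactive (i : ℕ) : IsActive (insertAt f j n) (n + 1) i ↔ i < min r j ∨ i = j := by
    rw [isActive_insertAt_iff_of_not_strictMonoOn h.isPermWord hj.le hmono]
    constructor
    · rintro ⟨hij, hi, hcut⟩
      rcases hij.eq_or_lt with rfl | hij
      · exact .inr rfl
      · exact .inl (lt_min ((h.skewCut_iff hi hj hij).1 hcut) hij)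
    · rintro (hi | rfl)
      · have hi' := h.isActive_of_lt (lt_min_iff.1 hi).1
        have hij := (lt_min_iff.1 hi).2
        exact ⟨hij.le, hi', (h.skewCut_iff hi' hj hij).2 (lt_min_iff.1 hi).1⟩
      · exact ⟨le_rfl, hj, skewCut_self⟩
  refine ⟨h.isPermWord.insertMax hj.le, by lia, by simpa using hactive, by simp,
    fun i k hi hk hik ↦ ?_⟩
  rw [isActive_insertAt_iff_of_not_strictMonoOn h.isPermWord hj.le hmono] at hi hk
  rw [skewCut_insertAt_iff_of_le hk.1, h.skewCut_iff hi.2.1 hk.2.1 hik]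
  lia

end SkewState

namespace AscentState

lemma not_skewCut (h : AscentState f n p M) (hj : IsActive f n j) (hi : 0 < i) (hij : i < j) :
    ¬SkewCut f i j :=
  hj.not_skewCut_of_ascent
    (h.strictMonoOn p.succ_pos (Nat.succ_lt_succ h.pos) one_pos) hi hij

lemma skewState (h : AscentState f n p M) : SkewState f n 1 (insert p (insert (p + 1) M)) where
  isPermWord := h.isPermWord
  pos := one_pos
  isActive_iff := by simpa using h.isActive_iff
  le_of_mem := by
    have := h.pos
    have := h.lt_of_mem
    grind
  skewCut_iff i j _ hj hij := by
    rcases i.eq_zero_or_pos with rfl | hi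
    · simp [skewCut_zero]
    · exact iff_of_false (h.not_skewCut hj hi hij) (by lia)

lemma insert_left (h : AscentState f n p M) :
    AscentState (insertAt f p n) (n + 1) p
      ((insert (p + 1) M).map (addRightEmbedding 1)) := by
  have hp : IsActive f n p := (h.isActive_iff p).2 (by simp)
  refine ascentState_insertAt h.isPermWord ((h.isActive_iff 0).2 (.inl rfl)) hp h.pos
    (h.strictMonoOn.mono (Set.Iio_subset_Iio p.le_succ))
    (fun i hi hip _ ↦ h.not_skewCut hp hi hip) fun k ↦ ?_
  rw [Finset.mem_insert]
  constructor
  · rintro (rfl | hk)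
    · exact ⟨p.lt_succ_self, (h.isActive_iff _).2 (by simp),
        directCut_of_strictMonoOn h.strictMonoOn⟩
    · exact ⟨p.lt_succ_self.trans (h.lt_of_mem k hk), (h.isActive_iff _).2 (by simp [hk]),
        h.directCut k hk⟩
  · rintro ⟨hpk, hk, -⟩
    have := (h.isActive_iff k).1 hk
    lia

lemma insert_right (h : AscentState f n p M) :
    AscentState (insertAt f (p + 1) n) (n + 1) (p + 1) ∅ := by
  have hp : IsActive f n (p + 1) := (h.isActive_iff _).2 (by simp)
  refine ascentState_insertAt (M := ∅) h.isPermWord ((h.isActive_iff 0).2 (.inl rfl)) hp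
    p.succ_pos h.strictMonoOn (fun i hi hip _ ↦ h.not_skewCut hp hi hip) fun k ↦ ?_
  refine iff_of_false (Finset.notMem_empty k) fun ⟨hpk, hk, hcut⟩ ↦ ?_
  have hkM : k ∈ M :=
    (((h.isActive_iff k).1 hk).resolve_left (by lia)).resolve_left (by lia) |>.resolve_left hpk.ne'
  exact h.not_directCut k hkM hcut

lemma insert_of_mem (h : AscentState f n p M) (hj : j ∈ M) :
    RigidState (insertAt f j n) (n + 1) j := by
  have hactive : IsActive f n j := (h.isActive_iff j).2 (by simp [hj])
  exact rigidState_insertAt h.isPermWord ((h.isActive_iff 0).2 (.inl rfl)) hactive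
    (fun hmono ↦ h.not_directCut j hj (directCut_of_strictMonoOn hmono))
    fun i hi hij _ ↦ h.not_skewCut hactive hi hij

end AscentState

namespace RigidState

lemma pos (h : RigidState f n j) : 0 < j := by
  by_contra! hj
  exact h.not_strictMonoOn (by simp [Nat.le_zero.1 hj, StrictMonoOn])

lemma skewState (h : RigidState f n j) : SkewState f n 1 {j} where
  isPermWord := h.isPermWord
  pos := one_pos
  isActive_iff := by simpa using h.isActive_iff
  le_of_mem i hi := (Finset.mem_singleton.1 hi).symm ▸ h.pos
  skewCut_iff i k hi hk hik := by
    rw [h.isActive_iff] at hi hk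
    obtain rfl : i = 0 := by lia
    simp [skewCut_zero]

lemma insert_self (h : RigidState f n j) : RigidState (insertAt f j n) (n + 1) j :=
  rigidState_insertAt h.isPermWord ((h.isActive_iff 0).2 (.inl rfl))
    ((h.isActive_iff j).2 (.inr rfl)) h.not_strictMonoOn fun i hi hij hactive ↦ by
      have := (h.isActive_iff i).1 hactive
      lia

end RigidState

end states

/-! ### The generating tree -/

section labels

variable {f : ℕ → ℕ} {j n p s : ℕ} {M : Finset ℕ} {A : Type*} [AddCommMonoid A]

open Classical in
/-- The active sites as a finite set, to sum over. -/
noncomputable def activeSites (f : ℕ → ℕ) (n : ℕ) : Finset ℕ :=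
  {j ∈ Finset.range (n + 1) | IsActive f n j}

lemma mem_activeSites : j ∈ activeSites f n ↔ IsActive f n j := by
  simp only [activeSites, Finset.mem_filter, Finset.mem_range, and_iff_right_iff_imp]
  exact fun h ↦ Nat.lt_succ_of_le h.le

/-- The labels of the generating tree: `root` is the empty word, `skew s m` a `SkewState` with
`r = s + 2` and `m` further sites, `ascent m` an `AscentState` with `m` further sites, and `rigid`
a `RigidState`. -/
inductive Label
  | root
  | skew (s m : ℕ)
  | ascent (m : ℕ)
  | rigid

/-- The succession rule: the labels of the words obtained by inserting a new maximum at an active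
site, listed by increasing site. -/
def Label.children : Label → Multiset Label
  | root => {skew 0 0}
  | skew s m =>
      {skew (s + 1) m, ascent 0} + (Multiset.range s).map (skew · 1) + .replicate m (skew s 1)
  | ascent m => {skew 0 (m + 2), ascent (m + 1), ascent 0} + .replicate m rigid
  | rigid => {skew 0 1, rigid}

/-- The word `f` of length `n` is in the situation described by the label. -/
inductive HasLabel (f : ℕ → ℕ) : ℕ → Label → Prop
  | root : HasLabel f 0 .root
  | skew {n s : ℕ} {M : Finset ℕ} (h : SkewState f n (s + 2) M) : HasLabel f n (.skew s M.card)
  | ascent {n p : ℕ} {M : Finset ℕ} (h : AscentState f n p M) : HasLabel f n (.ascent M.card)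
  | rigid {n j : ℕ} (h : RigidState f n j) : HasLabel f n .rigid

lemma skewState_zero : SkewState f 0 1 ∅ where
  isPermWord := ⟨by simp, by simp⟩
  pos := one_pos
  isActive_iff i := by
    simp only [Finset.notMem_empty, or_false, Nat.lt_one_iff]
    refine ⟨fun h ↦ Nat.le_zero.1 h.le, ?_⟩
    rintro rfl
    exact ⟨le_rfl, by simp, by simp, by simp⟩
  le_of_mem := by simp
  skewCut_iff i j _ hj hij := absurd hj.le (Nat.not_le_of_lt (Nat.zero_lt_of_lt hij))

lemma SkewState.sum_activeSites (h : SkewState f n (s + 2) M) (φ : ℕ → A) :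
    ∑ j ∈ activeSites f n, φ j = φ 0 + φ 1 + ∑ j ∈ .range s, φ (j + 2) + ∑ j ∈ M, φ j := by
  have hsites : activeSites f n = .range (s + 2) ∪ M := by
    ext i
    simp [mem_activeSites, h.isActive_iff]
  have hdisj : Disjoint (.range (s + 2)) M :=
    Finset.disjoint_left.2 fun i hi hM ↦ (h.le_of_mem i hM).not_gt (Finset.mem_range.1 hi)
  rw [hsites, Finset.sum_union hdisj, Finset.sum_range_succ', Finset.sum_range_succ']
  abel

lemma AscentState.sum_activeSites (h : AscentState f n p M) (φ : ℕ → A) :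
    ∑ j ∈ activeSites f n, φ j = φ 0 + φ p + φ (p + 1) + ∑ j ∈ M, φ j := by
  have hsites : activeSites f n = insert 0 (insert p (insert (p + 1) M)) := by
    ext i
    simp [mem_activeSites, h.isActive_iff]
  have hpos := h.pos
  have hlt := h.lt_of_mem
  rw [hsites, Finset.sum_insert (by grind), Finset.sum_insert (by grind),
    Finset.sum_insert (by grind)]
  abel

lemma RigidState.sum_activeSites (h : RigidState f n j) (φ : ℕ → A) :
    ∑ i ∈ activeSites f n, φ i = φ 0 + φ j := by
  have hsites : activeSites f n = {0, j} := by
    ext i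
    simp [mem_activeSites, h.isActive_iff]
  rw [hsites, Finset.sum_pair h.pos.ne]

lemma SkewState.hasLabel_insert_zero (h : SkewState f n (s + 1) M) :
    HasLabel (insertAt f 0 n) (n + 1) (.skew s M.card) := by
  simpa using HasLabel.skew h.insert_zero

lemma SkewState.hasLabel_insert_of_lt (h : SkewState f n (s + 2) M) (hj : j < s) :
    HasLabel (insertAt f (j + 2) n) (n + 1) (.skew j 1) := by
  have hchild := h.insert_of_two_le (by lia) (h.isActive_of_lt (by lia : j + 2 < s + 2)) (by lia)
  rw [min_eq_right (by lia)] at hchild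
  exact .skew hchild

lemma SkewState.hasLabel_insert_of_mem (h : SkewState f n (s + 2) M) (hj : j ∈ M) :
    HasLabel (insertAt f j n) (n + 1) (.skew s 1) := by
  have hsj := h.le_of_mem j hj
  have hchild := h.insert_of_two_le (by lia) ((h.isActive_iff j).2 (.inr hj)) (by lia)
  rw [min_eq_left hsj] at hchild
  exact .skew hchild

lemma AscentState.card_insert_right (h : AscentState f n p M) :
    (insert (p + 1) M).card = M.card + 1 :=
  Finset.card_insert_of_notMem fun hp ↦ (h.lt_of_mem _ hp).false

lemma AscentState.hasLabel_insert_zero (h : AscentState f n p M) :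
    HasLabel (insertAt f 0 n) (n + 1) (.skew 0 (M.card + 2)) := by
  have hp : p ∉ insert (p + 1) M := by
    have := h.lt_of_mem
    grind
  simpa only [Finset.card_insert_of_notMem hp, h.card_insert_right] using
    h.skewState.hasLabel_insert_zero

lemma AscentState.hasLabel_insert_left (h : AscentState f n p M) :
    HasLabel (insertAt f p n) (n + 1) (.ascent (M.card + 1)) := by
  simpa only [Finset.card_map, h.card_insert_right] using HasLabel.ascent h.insert_left

theorem HasLabel.sum_activeSites {ℓ : Label} {φ : (ℕ → ℕ) → A} {c : Label → A}
    (h : HasLabel f n ℓ) (hφ : ∀ g ℓ, HasLabel g (n + 1) ℓ → φ g = c ℓ) :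
    ∑ j ∈ activeSites f n, φ (insertAt f j n) = (ℓ.children.map c).sum := by
  cases h with
  | root =>
    have hsites : activeSites f 0 = {0} := by
      ext i
      simp [mem_activeSites, skewState_zero.isActive_iff]
    rw [hsites, Finset.sum_singleton, hφ _ _ skewState_zero.hasLabel_insert_zero]
    simp [Label.children]
  | skew h =>
    rw [h.sum_activeSites, hφ _ _ h.hasLabel_insert_zero,
      hφ _ _ (.ascent (h.insert_one (by lia))),
      Finset.sum_congr rfl fun j hj ↦ hφ _ _ (h.hasLabel_insert_of_lt (Finset.mem_range.1 hj)),
      Finset.sum_congr rfl fun j hj ↦ hφ _ _ (h.hasLabel_insert_of_mem hj)]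
    simp [Label.children, Finset.sum, add_assoc]
  | ascent h =>
    rw [h.sum_activeSites, hφ _ _ h.hasLabel_insert_zero, hφ _ _ h.hasLabel_insert_left,
      hφ _ _ (.ascent h.insert_right),
      Finset.sum_congr rfl fun j hj ↦ hφ _ _ (.rigid (h.insert_of_mem hj))]
    simp [Label.children, add_assoc]
  | rigid h =>
    rw [h.sum_activeSites, hφ _ _ h.skewState.hasLabel_insert_zero,
      hφ _ _ (.rigid h.insert_self)]
    simp [Label.children]

/-- `extensionCount k n f` is the number of ways to insert `k` successive new maxima at active sites
into the word `f` of length `n`, that is, of its descendants `k` levels down the generating tree. -/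
noncomputable def extensionCount : ℕ → ℕ → (ℕ → ℕ) → ℕ
  | 0, _, _ => 1
  | k + 1, n, f => ∑ j ∈ activeSites f n, extensionCount k (n + 1) (insertAt f j n)

end labels

/-! ### Generating functions -/

section generatingFunction

lemma X_mul_catalanGF_sq : X * catalanGF ^ 2 = catalanGF - 1 := by
  have hmap : catalanGF = catalanSeries.map (Nat.castRingHom ℚ) := by
    ext n
    simp [catalanGF]
  have hsq := congrArg (PowerSeries.map (Nat.castRingHom ℚ)) catalanSeries_sq_mul_X_add_one
  simp only [map_add, map_mul, map_pow, map_one, map_X, ← hmap] at hsq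
  linear_combination hsq

/-- The common denominator of the generating functions of the labels. -/
noncomputable def kernel : ℚ⟦X⟧ :=
  (1 - X) * (3 * X ^ 2 - 3 * X + 1) - X * (2 * X ^ 2 - 2 * X + 1) * catalanGF

lemma kernel_mul_inv :
    ((1 - X) * (3 * X ^ 2 - 3 * X + 1) - X * (2 * X ^ 2 - 2 * X + 1) * catalanGF) * kernel⁻¹ = 1 :=
  PowerSeries.mul_inv_cancel kernel (by simp [kernel])

/-- The generating function of the descendants of a label by level. The closed forms come from
solving the system `Label.gf_eq` with `skew s m` geometric in `s` and all series affine in `m`. -/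
noncomputable def Label.gf : Label → ℚ⟦X⟧
  | root => 1 + X * ((3 * X ^ 2 - 3 * X + 1) * kernel⁻¹)
  | skew s m => (3 * X ^ 2 - 3 * X + 1) * kernel⁻¹ * catalanGF ^ (s + 1) *
      (1 + ((m : ℚ⟦X⟧) - 1) * X * catalanGF)
  | ascent m => kernel⁻¹ * (3 * X ^ 2 - 3 * X + 1 + (X - X ^ 2) * catalanGF) +
      (m : ℚ⟦X⟧) * (kernel⁻¹ * X * catalanGF * (1 - 2 * X))
  | rigid => kernel⁻¹ * (3 * X ^ 2 - 3 * X + 1 - X ^ 2 * catalanGF)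

lemma X_mul_sum_gf_skew (s : ℕ) :
    X * ∑ j ∈ .range s, (Label.skew j 1).gf =
      (3 * X ^ 2 - 3 * X + 1) * kernel⁻¹ * ((1 - X * catalanGF) * (catalanGF ^ s - 1)) := by
  induction s with
  | zero => simp
  | succ s ih =>
    rw [Finset.sum_range_succ, mul_add, ih, Label.gf, Nat.cast_one]
    linear_combination
      (3 * X ^ 2 - 3 * X + 1) * kernel⁻¹ * catalanGF ^ s * X_mul_catalanGF_sq

theorem Label.gf_eq (ℓ : Label) : ℓ.gf = 1 + X * (ℓ.children.map gf).sum := by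
  cases ℓ with
  | root =>
    simp only [children, gf, Multiset.map_singleton, Multiset.sum_singleton]
    push_cast
    linear_combination X * (3 * X ^ 2 - 3 * X + 1) * kernel⁻¹ * X_mul_catalanGF_sq
  | skew s m =>
    have hsum : (children (skew s m) |>.map gf).sum = gf (skew (s + 1) m) + gf (ascent 0) +
        ∑ j ∈ .range s, gf (skew j 1) + (m : ℚ⟦X⟧) * gf (skew s 1) := by
      simp [children, Finset.sum, add_assoc]
    rw [hsum, mul_add, mul_add, X_mul_sum_gf_skew]
    simp only [gf]
    push_cast
    linear_combination kernel_mul_inv - (3 * X ^ 2 - 3 * X + 1) * kernel⁻¹ * catalanGF ^ s *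
      (1 + ((m : ℚ⟦X⟧) - 1) * X * catalanGF) * X_mul_catalanGF_sq
  | ascent m =>
    have hsum : (children (ascent m) |>.map gf).sum =
        gf (skew 0 (m + 2)) + gf (ascent (m + 1)) + gf (ascent 0) + (m : ℚ⟦X⟧) * gf rigid := by
      simp [children, add_assoc]
    rw [hsum]
    simp only [gf]
    push_cast
    linear_combination kernel_mul_inv -
      (3 * X ^ 2 - 3 * X + 1) * kernel⁻¹ * ((m : ℚ⟦X⟧) + 1) * X * X_mul_catalanGF_sq
  | rigid =>
    have hsum : (children rigid |>.map gf).sum = gf (skew 0 1) + gf rigid := by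
      simp [children]
    rw [hsum]
    simp only [gf]
    push_cast
    linear_combination kernel_mul_inv

theorem HasLabel.extensionCount_eq_coeff (k : ℕ) {f : ℕ → ℕ} {n : ℕ} {ℓ : Label}
    (h : HasLabel f n ℓ) : (extensionCount k n f : ℚ) = coeff k ℓ.gf := by
  induction k generalizing f n ℓ with
  | zero => rw [ℓ.gf_eq]; simp [extensionCount]
  | succ k ih =>
    rw [ℓ.gf_eq, map_add, coeff_one, if_neg k.succ_ne_zero, zero_add, coeff_succ_X_mul,
      map_multiset_sum, Multiset.map_map, extensionCount, Nat.cast_sum]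
    exact h.sum_activeSites fun g ℓ' hg ↦ ih hg

end generatingFunction

/-! ### Permutations as words -/

section permutations

variable {n : ℕ}

/-- A permutation as a word, with junk value `0` beyond its length. -/
def word (π : Equiv.Perm (Fin n)) (i : ℕ) : ℕ := if h : i < n then π ⟨i, h⟩ else 0

@[simp] lemma word_val (π : Equiv.Perm (Fin n)) (i : Fin n) : word π i = π i := by simp [word]

lemma isPermWord_word (π : Equiv.Perm (Fin n)) : IsPermWord (word π) n where
  lt i hi := by simp [word, hi]
  injOn i hi j hj hij := by
    rw [Set.mem_Iio] at hi hj
    simpa [word, hi, hj, Fin.val_inj] using hij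

/-- The permutation obtained by inserting a new maximum so that it gets index `j`. -/
def insertMax (j : Fin (n + 1)) (π : Equiv.Perm (Fin n)) : Equiv.Perm (Fin (n + 1)) :=
  (finSuccEquiv' j).trans (π.optionCongr.trans (finSuccEquiv' (Fin.last n)).symm)

@[simp] lemma insertMax_self (j : Fin (n + 1)) (π : Equiv.Perm (Fin n)) :
    insertMax j π j = Fin.last n := by
  simp [insertMax]

@[simp] lemma insertMax_succAbove (j : Fin (n + 1)) (π : Equiv.Perm (Fin n)) (i : Fin n) :
    insertMax j π (j.succAbove i) = (π i).castSucc := by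
  simp [insertMax]

lemma insertMax_injective :
    Function.Injective fun x : Fin (n + 1) × Equiv.Perm (Fin n) ↦ insertMax x.1 x.2 := by
  rintro ⟨j, π⟩ ⟨j', π'⟩ h
  dsimp only at h
  obtain rfl : j = j' := (insertMax j' π').injective <| by
    rw [insertMax_self, ← h, insertMax_self]
  have hπ : π = π' := Equiv.ext fun i ↦ by
    simpa using congrArg (· (j.succAbove i)) h
  rw [hπ]

lemma insertMax_bijective :
    Function.Bijective fun x : Fin (n + 1) × Equiv.Perm (Fin n) ↦ insertMax x.1 x.2 :=
  (Fintype.bijective_iff_injective_and_card _).2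
    ⟨insertMax_injective, by simp [Fintype.card_perm, Nat.factorial_succ]⟩

lemma val_succAbove (j : Fin (n + 1)) (i : Fin n) : (j.succAbove i : ℕ) = skip j i := by
  simp only [Fin.succAbove, skip, Fin.lt_def, Fin.val_castSucc]
  split_ifs <;> simp

lemma word_insertMax (j : Fin (n + 1)) (π : Equiv.Perm (Fin n)) :
    word (insertMax j π) = insertAt (word π) j n := by
  funext i
  by_cases hi : i < n + 1
  · lift i to Fin (n + 1) using hi
    rw [word_val]
    rcases eq_or_ne i j with rfl | hne
    · simp
    · obtain ⟨i, rfl⟩ := Fin.exists_succAbove_eq hne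
      simp [val_succAbove]
  · grind [word, insertAt]

open Classical in
/-- The permutations avoiding 2134, 2314 and 1423. -/
noncomputable def avoiders (n : ℕ) : Finset (Equiv.Perm (Fin n)) := {π | AvoidsTriple (word π) n}

lemma mem_avoiders {π : Equiv.Perm (Fin n)} : π ∈ avoiders n ↔ AvoidsTriple (word π) n := by
  simp [avoiders]

lemma sum_avoiders_succ {A : Type*} [AddCommMonoid A] (φ : (ℕ → ℕ) → A) :
    ∑ π ∈ avoiders (n + 1), φ (word π) =
      ∑ π ∈ avoiders n, ∑ j ∈ activeSites (word π) n, φ (insertAt (word π) j n) := by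
  classical
  rw [avoiders, Finset.sum_filter, ← (Equiv.ofBijective _ insertMax_bijective).sum_comp,
    Fintype.sum_prod_type_right, avoiders, Finset.sum_filter]
  refine Finset.sum_congr rfl fun π _ ↦ ?_
  simp only [Equiv.ofBijective_apply, word_insertMax,
    avoidsTriple_insertAt_iff (isPermWord_word π) (Nat.lt_succ_iff.1 (Fin.is_lt _))]
  rw [activeSites, Finset.sum_filter, Finset.sum_range]
  split_ifs with h <;> simp [h]

lemma sum_extensionCount_avoiders (k n : ℕ) :
    ∑ π ∈ avoiders n, extensionCount k n (word π) = (avoiders (n + k)).card := by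
  induction k generalizing n with
  | zero => simp [extensionCount]
  | succ k ih =>
    simp only [extensionCount]
    rw [← sum_avoiders_succ, ih, add_right_comm, add_assoc]

lemma card_avoiders (n : ℕ) : ((avoiders n).card : ℚ) = coeff n Label.root.gf := by
  have hzero : avoiders 0 = {1} := by
    ext π
    simp only [mem_avoiders, Finset.mem_singleton, Subsingleton.elim π 1, iff_true]
    constructor <;> simp
  have hcount := sum_extensionCount_avoiders n 0
  rw [hzero, Finset.sum_singleton, zero_add] at hcount
  rw [← hcount, HasLabel.root.extensionCount_eq_coeff]

end permutations

/-! ### Patterns -/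

section patterns

variable {n k : ℕ}

lemma containsPattern_iff_of_inverse {π : Equiv.Perm (Fin n)} {σ τ : Fin k → Fin k}
    (hστ : Function.LeftInverse σ τ) (hτσ : Function.RightInverse σ τ) :
    ContainsPattern π σ ↔ ∃ f : Fin k ↪o Fin n, StrictMono fun i ↦ π (f (τ i)) := by
  refine exists_congr fun f ↦ ⟨fun h a b hab ↦ ?_, fun h a b ↦ ?_⟩
  · rwa [← h, hστ, hστ]
  · rw [← h.lt_iff_lt, hτσ, hτσ]

lemma exists_orderEmbedding_fin_four {P : (Fin 4 → ℕ) → Prop} :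
    (∃ f : Fin 4 ↪o Fin n, P fun i ↦ f i) ↔
      ∃ a b c d, a < b ∧ b < c ∧ c < d ∧ d < n ∧ P ![a, b, c, d] := by
  constructor
  · rintro ⟨f, hf⟩
    refine ⟨f 0, f 1, f 2, f 3, f.strictMono (by decide), f.strictMono (by decide),
      f.strictMono (by decide), (f 3).is_lt, ?_⟩
    convert hf using 1
    funext i
    fin_cases i <;> rfl
  · rintro ⟨a, b, c, d, hab, hbc, hcd, hd, hP⟩
    refine ⟨.ofStrictMono ![⟨a, by lia⟩, ⟨b, by lia⟩, ⟨c, by lia⟩, ⟨d, hd⟩] ?_, ?_⟩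
    · rw [Fin.strictMono_iff_lt_succ]
      intro i
      fin_cases i
      exacts [hab, hbc, hcd]
    · convert hP using 1
      funext i
      fin_cases i <;> rfl

lemma containsPattern_iff_exists_word {π : Equiv.Perm (Fin n)} {σ τ : Fin 4 → Fin 4}
    (hστ : Function.LeftInverse σ τ) (hτσ : Function.RightInverse σ τ) :
    ContainsPattern π σ ↔ ∃ a b c d, a < b ∧ b < c ∧ c < d ∧ d < n ∧
      word π (![a, b, c, d] (τ 0)) < word π (![a, b, c, d] (τ 1)) ∧
      word π (![a, b, c, d] (τ 1)) < word π (![a, b, c, d] (τ 2)) ∧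
      word π (![a, b, c, d] (τ 2)) < word π (![a, b, c, d] (τ 3)) := by
  rw [containsPattern_iff_of_inverse hστ hτσ, ← exists_orderEmbedding_fin_four (P := fun q ↦
    word π (q (τ 0)) < word π (q (τ 1)) ∧ word π (q (τ 1)) < word π (q (τ 2)) ∧
      word π (q (τ 2)) < word π (q (τ 3)))]
  refine exists_congr fun f ↦ ?_
  simp [Fin.strictMono_iff_lt_succ, Fin.forall_fin_succ]

lemma avoidsTriple_word_iff {π : Equiv.Perm (Fin n)} :
    AvoidsTriple (word π) n ↔ ∀ σ ∈ ({![1, 0, 2, 3], ![1, 2, 0, 3], ![0, 3, 1, 2]} :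
      Set (Fin 4 → Fin 4)), ¬ContainsPattern π σ := by
  have h2134 := containsPattern_iff_exists_word (π := π) (σ := ![1, 0, 2, 3]) (τ := ![1, 0, 2, 3])
    (by decide) (by decide)
  have h2314 := containsPattern_iff_exists_word (π := π) (σ := ![1, 2, 0, 3]) (τ := ![2, 0, 1, 3])
    (by decide) (by decide)
  have h1423 := containsPattern_iff_exists_word (π := π) (σ := ![0, 3, 1, 2]) (τ := ![0, 2, 3, 1])
    (by decide) (by decide)
  simp only [Set.mem_insert_iff, Set.mem_singleton_iff, forall_eq_or_imp, forall_eq, h2134, h2314,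
    h1423]
  constructor
  · rintro ⟨h₁, h₂, h₃⟩
    refine ⟨?_, ?_, ?_⟩ <;> rintro ⟨a, b, c, d, hab, hbc, hcd, hd, hval⟩
    exacts [h₁ hab hbc hcd hd hval, h₂ hab hbc hcd hd hval, h₃ hab hbc hcd hd hval]
  · rintro ⟨h₁, h₂, h₃⟩
    refine ⟨?_, ?_, ?_⟩ <;> intro a b c d hab hbc hcd hd hval
    exacts [h₁ ⟨a, b, c, d, hab, hbc, hcd, hd, hval⟩, h₂ ⟨a, b, c, d, hab, hbc, hcd, hd, hval⟩,
      h₃ ⟨a, b, c, d, hab, hbc, hcd, hd, hval⟩]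

/-- The reverse complement of a pattern, turning its diagram by 180 degrees; for a permutation this
is conjugation by `Fin.revPerm`. -/
def revComp (σ : Fin k → Fin k) : Fin k → Fin k := Fin.rev ∘ σ ∘ Fin.rev

lemma containsPattern_revComp {π : Equiv.Perm (Fin n)} {σ : Fin k → Fin k}
    (h : ContainsPattern π σ) :
    ContainsPattern (Fin.revPerm.permCongr π) (revComp σ) := by
  obtain ⟨f, hf⟩ := h
  refine ⟨.ofStrictMono (fun i ↦ (f i.rev).rev) ?_, fun a b ↦ ?_⟩
  · intro a b hab
    simpa using hab
  · simpa [revComp, OrderEmbedding.ofStrictMono] using hf b.rev a.rev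

lemma containsPattern_revComp_iff {π : Equiv.Perm (Fin n)} {σ : Fin k → Fin k} :
    ContainsPattern (Fin.revPerm.permCongr π) (revComp σ) ↔ ContainsPattern π σ := by
  refine ⟨fun h ↦ ?_, containsPattern_revComp⟩
  have hπ : Fin.revPerm.permCongr (Fin.revPerm.permCongr π) = π := by
    ext
    simp
  have hσ : revComp (revComp σ) = σ := by
    ext
    simp [revComp]
  simpa only [hπ, hσ] using containsPattern_revComp h

lemma avoiderCount_image_revComp (T : Set (Fin 4 → Fin 4)) (n : ℕ) :
    avoiderCount (revComp '' T) n = avoiderCount T n :=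
  (Nat.card_congr <| Fin.revPerm.permCongr.subtypeEquiv fun π ↦ by
    simp only [Set.forall_mem_image, containsPattern_revComp_iff]).symm

lemma avoiderCount_eq_card_avoiders (n : ℕ) :
    avoiderCount {![0, 1, 3, 2], ![0, 3, 1, 2], ![1, 2, 0, 3]} n = (avoiders n).card := by
  have himage : revComp '' {![0, 1, 3, 2], ![0, 3, 1, 2], ![1, 2, 0, 3]} =
      {![1, 0, 2, 3], ![1, 2, 0, 3], ![0, 3, 1, 2]} := by
    rw [Set.image_insert_eq, Set.image_pair, show revComp ![0, 1, 3, 2] = ![1, 0, 2, 3] by decide,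
      show revComp ![0, 3, 1, 2] = ![1, 2, 0, 3] by decide,
      show revComp ![1, 2, 0, 3] = ![0, 3, 1, 2] by decide]
  rw [← avoiderCount_image_revComp, himage, avoiderCount]
  simp only [← avoidsTriple_word_iff, ← mem_avoiders, Nat.card_eq_fintype_card, Fintype.card_coe]

end patterns

theorem avoiderGF_eq_gf_root :
    avoiderGF {![0, 1, 3, 2], ![0, 3, 1, 2], ![1, 2, 0, 3]} = Label.root.gf := by
  ext n
  rw [avoiderGF, coeff_mk, avoiderCount_eq_card_avoiders, card_avoiders]

end TripleAvoidance

theorem statement_17 :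
    ((X : PowerSeries ℚ) * (2*X^2 - 2*X + 1) * catalanGF - (1 - X) * (3*X^2 - 3*X + 1)) * avoiderGF ({![0,1,3,2], ![0,3,1,2], ![1,2,0,3]} : Set (Fin 4 → Fin 4)) =
      X * (2*X^2 - 2*X + 1) * catalanGF - (3*X^2 - 3*X + 1) := by
  rw [TripleAvoidance.avoiderGF_eq_gf_root, TripleAvoidance.Label.gf]
  linear_combination (-X * (3 * X ^ 2 - 3 * X + 1)) * TripleAvoidance.kernel_mul_inv
end
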